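/- arXiv:2601.10526 — 8 statements merged into one kernel-verified Lean document; each statement's English description precedes it below -/
import Mathlib

section
/- Let p0, p1 ∈ [0,1], let n, kX, kY be natural numbers, and let G be a kX × n matrix and H a kY × n matrix over ZMod 2. Then there exists a channel κ : (Fin kX → ZMod 2) → PMF ((Fin kX → ZMod 2) × (Fin kY → ZMod 2)) such that for each i ∈ {0,1}, the pushforward through κ of the law of G.mulVec (x + y) under DSBS(p_i)^⊗n equals the law of (G.mulVec x, H.mulVec y) under DSBS(p_i)^⊗n; and symmetrically there exists a channel κ' : (Fin kY → ZMod 2) → PMF ((Fin kX → ZMod 2) × (Fin kY → ZMod 2)) such that for each i ∈ {0,1}, the pushforward through κ' of the law of H.mulVec (x + y) under DSBS(p_i)^⊗n equals the law of (G.mulVec x, H.mulVec y) under DSBS(p_i)^⊗n. (In other words, for distributed hypothesis testing of DSBS(p0) versus DSBS(p1) with linear compression, the statistic G(X^n ⊕ Y^n) is better in the Blackwell order than (G X^n, H Y^n), and likewise H(X^n ⊕ Y^n) is better than (G X^n, H Y^n).) -/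
/-!
The mass of `DSBS(p)^⊗n` depends on `(x, y)` only through `x + y`, so it is invariant under the
diagonal translations `(x, y) ↦ (x + w, y + w)`. Averaging over a uniform `w` and reparametrising
by `u = y + w` or `u = x + w` shows that `(X, Y)` has the law of `(X + Y + U, U)` and of
`(U, X + Y + U)`, where `U` is uniform and independent of `(X, Y)` (`PMF.eq_bind_uniform_diag`).
Hence `(G X, H Y)` has the law of `(G (X + Y) + G U, H U)`, which is obtained from `G (X + Y)` by
the channel `s ↦ law of (s + G U, H U)`, and also the law of `(G U, H (X + Y) + H U)`, obtained from
`H (X + Y)` by the channel `s ↦ law of (G U, s + H U)`. Neither channel depends on `p`.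
-/

open scoped ENNReal

/-- The mass function of `DSBS(p)^⊗n`: the law of `n` i.i.d. pairs `(X_ℓ, Y_ℓ)` where
`X_ℓ` is uniform on `ZMod 2` and `Y_ℓ = X_ℓ + Z_ℓ` with `Z_ℓ ∼ Bernoulli(p)` independent. -/
noncomputable def dsbsMass (p : ℝ) (n : ℕ)
    (xy : (Fin n → ZMod 2) × (Fin n → ZMod 2)) : ℝ≥0∞ :=
  ∏ ℓ : Fin n, (1 / 2 : ℝ≥0∞) *
    (if xy.1 ℓ ≠ xy.2 ℓ then ENNReal.ofReal p else ENNReal.ofReal (1 - p))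

theorem PMF.map_equiv_apply {α β : Type*} (μ : PMF α) (e : α ≃ β) (b : β) :
    μ.map e b = μ (e.symm b) := by
  classical
  rw [PMF.map_apply, tsum_eq_single (e.symm b)]
  · simp
  · intro a ha
    rw [if_neg]
    rintro rfl
    simp at ha

theorem PMF.uniform_map_equiv {α : Type*} [Fintype α] [Nonempty α] (e : α ≃ α) :
    (PMF.uniformOfFintype α).map e = PMF.uniformOfFintype α := by
  ext b
  rw [PMF.map_equiv_apply]
  simp only [PMF.uniformOfFintype_apply]

/-- A law on `A × A` invariant under diagonal translations is unchanged when the pair is translated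
along the diagonal by an independent uniform element. -/
theorem PMF.eq_bind_uniform_diag {A : Type*} [AddCommGroup A] [Fintype A] (μ : PMF (A × A))
    (hμ : ∀ w x y, μ (x + w, y + w) = μ (x, y)) :
    μ = μ.bind fun xy => (PMF.uniformOfFintype A).map fun w => (xy.1 + w, xy.2 + w) := by
  have h (w : A) : μ.map (fun xy => (xy.1 + w, xy.2 + w)) = μ := by
    ext ⟨x, y⟩
    have := PMF.map_equiv_apply μ ((Equiv.addRight w).prodCongr (Equiv.addRight w)) (x, y)
    have h2 := hμ w (x - w) (y - w)
    simp only [sub_add_cancel] at h2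
    rw [h2]
    simpa [Prod.map, sub_eq_add_neg] using this
  calc μ = (PMF.uniformOfFintype A).bind fun w => μ.map fun xy => (xy.1 + w, xy.2 + w) := by
        simp [h]
    _ = _ := by
        simp only [PMF.map, Function.comp_def]
        rw [PMF.bind_comm]

theorem dsbsMass_add_diag (p : ℝ) (n : ℕ) (w x y : Fin n → ZMod 2) :
    dsbsMass p n (x + w, y + w) = dsbsMass p n (x, y) := by
  simp [dsbsMass]

section

variable {p : ℝ} {n kX kY : ℕ} (G : Matrix (Fin kX) (Fin n) (ZMod 2))
  (H : Matrix (Fin kY) (Fin n) (ZMod 2)) (μ : PMF ((Fin n → ZMod 2) × (Fin n → ZMod 2)))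

theorem bind_channel_left (hμ : ∀ xy, μ xy = dsbsMass p n xy) :
    (μ.map (fun xy => G.mulVec (xy.1 + xy.2))).bind
        (fun s => (PMF.uniformOfFintype (Fin n → ZMod 2)).map
          fun u => (s + G.mulVec u, H.mulVec u))
      = μ.map (fun xy => (G.mulVec xy.1, H.mulVec xy.2)) := by
  conv_rhs => rw [PMF.eq_bind_uniform_diag μ (by simp [hμ, dsbsMass_add_diag])]
  rw [PMF.bind_map, PMF.map_bind]
  congr 1
  funext xy
  -- Substitute `u = y + w`, so that `x + w = x + y + u` in characteristic two.
  rw [Function.comp_apply, ← PMF.uniform_map_equiv (Equiv.addLeft xy.2), PMF.map_comp,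
    PMF.uniform_map_equiv, PMF.map_comp]
  congr 1
  funext w
  have h : xy.1 + xy.2 + (xy.2 + w) = xy.1 + w := by
    ext i
    simp only [Pi.add_apply]
    linear_combination CharTwo.add_self_eq_zero (xy.2 i)
  simp [← Matrix.mulVec_add, h]

theorem bind_channel_right (hμ : ∀ xy, μ xy = dsbsMass p n xy) :
    (μ.map (fun xy => H.mulVec (xy.1 + xy.2))).bind
        (fun s => (PMF.uniformOfFintype (Fin n → ZMod 2)).map
          fun u => (G.mulVec u, s + H.mulVec u))
      = μ.map (fun xy => (G.mulVec xy.1, H.mulVec xy.2)) := by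
  conv_rhs => rw [PMF.eq_bind_uniform_diag μ (by simp [hμ, dsbsMass_add_diag])]
  rw [PMF.bind_map, PMF.map_bind]
  congr 1
  funext xy
  -- Substitute `u = x + w`, so that `y + w = x + y + u` in characteristic two.
  rw [Function.comp_apply, ← PMF.uniform_map_equiv (Equiv.addLeft xy.1), PMF.map_comp,
    PMF.uniform_map_equiv, PMF.map_comp]
  congr 1
  funext w
  have h : xy.1 + xy.2 + (xy.1 + w) = xy.2 + w := by
    ext i
    simp only [Pi.add_apply]
    linear_combination CharTwo.add_self_eq_zero (xy.1 i)
  simp [← Matrix.mulVec_add, h]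

end

/-- Using the same linear code is always better: for testing `DSBS(p₀)` vs `DSBS(p₁)` with
linear compression matrices `G, H`, the statistic `G(Xⁿ ⊕ Yⁿ)` is better in the Blackwell
order than `(G Xⁿ, H Yⁿ)`, and likewise `H(Xⁿ ⊕ Yⁿ)` is better than `(G Xⁿ, H Yⁿ)`. -/
theorem same_linear_code_is_better
    (p0 p1 : ℝ) (hp0 : p0 ∈ Set.Icc (0 : ℝ) 1) (hp1 : p1 ∈ Set.Icc (0 : ℝ) 1)
    (n kX kY : ℕ)
    (G : Matrix (Fin kX) (Fin n) (ZMod 2)) (H : Matrix (Fin kY) (Fin n) (ZMod 2))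
    (μ0 μ1 : PMF ((Fin n → ZMod 2) × (Fin n → ZMod 2)))
    (hμ0 : ∀ xy, μ0 xy = dsbsMass p0 n xy)
    (hμ1 : ∀ xy, μ1 xy = dsbsMass p1 n xy) :
    (∃ κ : (Fin kX → ZMod 2) → PMF ((Fin kX → ZMod 2) × (Fin kY → ZMod 2)),
      (μ0.map (fun xy => G.mulVec (xy.1 + xy.2))).bind κ
        = μ0.map (fun xy => (G.mulVec xy.1, H.mulVec xy.2)) ∧
      (μ1.map (fun xy => G.mulVec (xy.1 + xy.2))).bind κ
        = μ1.map (fun xy => (G.mulVec xy.1, H.mulVec xy.2))) ∧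
    (∃ κ' : (Fin kY → ZMod 2) → PMF ((Fin kX → ZMod 2) × (Fin kY → ZMod 2)),
      (μ0.map (fun xy => H.mulVec (xy.1 + xy.2))).bind κ'
        = μ0.map (fun xy => (G.mulVec xy.1, H.mulVec xy.2)) ∧
      (μ1.map (fun xy => H.mulVec (xy.1 + xy.2))).bind κ'
        = μ1.map (fun xy => (G.mulVec xy.1, H.mulVec xy.2))) := by
  exact ⟨⟨_, bind_channel_left G H μ0 hμ0, bind_channel_left G H μ1 hμ1⟩,
    ⟨_, bind_channel_right G H μ0 hμ0, bind_channel_right G H μ1 hμ1⟩⟩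
end

section
/- Let p ∈ [0,1], let n ∈ ℕ, and let G be a k × n matrix over ZMod 2 with rank k (full row rank). Then there exists a channel κ : (Fin k → ZMod 2) → PMF (Fin k → ZMod 2) such that: (i) the pushforward through κ of Bern(p)^⊗k equals the pushforward of Bern(p)^⊗n under z ↦ G.mulVec z, and (ii) the pushforward through κ of the uniform PMF on (Fin k → ZMod 2) equals the uniform PMF on (Fin k → ZMod 2). (This is the degradation underlying the claim that, for testing DSBS(p) versus DSBS(1/2) — i.e., for or against independence — truncation X^k ⊕ Y^k is better in the Blackwell order than G(X^n ⊕ Y^n) for any rank-k linear code G.) -/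
/-!
Full row rank provides `k` linearly independent columns of `G`, indexed by an injection
`e : Fin k → Fin n` (`exists_independent_columns`).  The channel receives `x : Fin k → ZMod 2`,
draws a fresh noise vector `z ∼ Bern(p)^⊗n`, overwrites the coordinates `e i` of `z` by `x i`, and
outputs the image of the result under `G`.

If `x ∼ Bern(p)^⊗k`, the overwritten vector is again `Bern(p)^⊗n` (`bind_map_extend`): exchanging
`x` with the coordinates of `z` selected by `e` is an involution preserving the product mass.
If `x` is uniform, then for each fixed `z` the map `x ↦ G (z overwritten by x)` is injective, hence
a permutation of `Fin k → ZMod 2`, so the output is uniform conditionally on the noise.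
-/

open scoped ENNReal

/-- The mass function of `Bern(p)^⊗n`: `n` i.i.d. `Bernoulli(p)` bits. -/
noncomputable def bernMass (p : ℝ) (n : ℕ) (z : Fin n → ZMod 2) : ℝ≥0∞ :=
  ∏ ℓ : Fin n, (if z ℓ = 1 then ENNReal.ofReal p else ENNReal.ofReal (1 - p))

/-- The exchange `(x, z) ↦ (z ∘ e, z overwritten by x along e)`, an involution because `e` is
injective. -/
noncomputable def swapAlong {ι κ α : Type*} (e : ι → κ) (he : Function.Injective e) :
    Equiv.Perm ((ι → α) × (κ → α)) :=
  Function.Involutive.toPerm (fun a => (a.2 ∘ e, Function.extend e a.1 a.2)) <| by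
    rintro ⟨x, z⟩
    refine Prod.ext (Function.extend_comp he _ _) ?_
    funext j
    by_cases hj : ∃ i, e i = j
    · obtain ⟨i, rfl⟩ := hj
      simp [he.extend_apply]
    · simp [Function.extend_apply' _ _ _ hj]

theorem prod_mul_prod_extend {ι κ α M : Type*} [Fintype ι] [Fintype κ] [CommMonoid M]
    (e : ι → κ) (he : Function.Injective e) (g : α → M) (x : ι → α) (z : κ → α) :
    (∏ i, g (z (e i))) * ∏ j, g (Function.extend e x z j) = (∏ i, g (x i)) * ∏ j, g (z j) := by
  classical
  have split (f : κ → M) :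
      ∏ j, f j = (∏ i, f (e i)) * ∏ j ∈ (Finset.univ.image e)ᶜ, f j := by
    rw [← Finset.prod_mul_prod_compl (Finset.univ.image e), Finset.prod_image he.injOn]
  rw [split fun j => g (Function.extend e x z j), split fun j => g (z j)]
  have off : ∏ j ∈ (Finset.univ.image e)ᶜ, g (Function.extend e x z j) =
      ∏ j ∈ (Finset.univ.image e)ᶜ, g (z j) := by
    refine Finset.prod_congr rfl fun j hj => ?_
    rw [Function.extend_apply' _ _ _ (by simpa using hj)]
  simp only [he.extend_apply, off]
  exact mul_left_comm _ _ _

/-- Overwriting `k` coordinates of an i.i.d. vector by independent bits of the same law does not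
change its law. -/
theorem bind_map_extend (p : ℝ) {n k : ℕ} (e : Fin k → Fin n) (he : Function.Injective e)
    (μ : PMF (Fin k → ZMod 2)) (hμ : ∀ z, μ z = bernMass p k z)
    (ν : PMF (Fin n → ZMod 2)) (hν : ∀ z, ν z = bernMass p n z) :
    (μ.bind fun x => ν.map (Function.extend e x)) = ν := by
  classical
  ext w
  have mass (a : (Fin k → ZMod 2) × (Fin n → ZMod 2)) :
      μ (swapAlong e he a).1 * ν (swapAlong e he a).2 = μ a.1 * ν a.2 := by
    simp only [hμ, hν, bernMass]
    exact prod_mul_prod_extend e he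
      (fun b : ZMod 2 => if b = 1 then ENNReal.ofReal p else ENNReal.ofReal (1 - p)) a.1 a.2
  calc (μ.bind fun x => ν.map (Function.extend e x)) w
      = ∑' a : (Fin k → ZMod 2) × (Fin n → ZMod 2),
          μ a.1 * ν a.2 * (if w = Function.extend e a.1 a.2 then 1 else 0) := by
        rw [ENNReal.tsum_prod']
        simp [PMF.bind_apply, PMF.map_apply, Finset.mul_sum]
    _ = ∑' a : (Fin k → ZMod 2) × (Fin n → ZMod 2),
          μ a.1 * ν a.2 * (if w = a.2 then 1 else 0) := by
        rw [← (swapAlong e he).tsum_eq fun a : (Fin k → ZMod 2) × (Fin n → ZMod 2) =>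
          μ a.1 * ν a.2 * (if w = a.2 then 1 else 0)]
        simp only [mass]
        rfl
    _ = ν w := by
        rw [ENNReal.tsum_prod']
        have total : ∑ a, μ a = 1 := by rw [← tsum_fintype (L := .unconditional _), μ.tsum_coe]
        simp [← Finset.sum_mul, total]

theorem exists_independent_columns {K : Type*} [Field K] {n k : ℕ}
    (G : Matrix (Fin k) (Fin n) K) (hG : G.rank = k) :
    ∃ e : Fin k → Fin n, LinearIndependent K fun i => G.col (e i) := by
  rw [Matrix.rank_eq_finrank_span_cols] at hG
  obtain ⟨f, hf, -, hli⟩ := Submodule.exists_fun_fin_finrank_span_eq K (Set.range G.col)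
  choose e he using hf
  refine ⟨fun i => e (Fin.cast hG.symm i), ?_⟩
  simp only [he]
  exact hli.comp (Fin.cast hG.symm) (Fin.cast_injective _)

theorem injective_mulVec_extend {K : Type*} [Field K] {n k : ℕ}
    (G : Matrix (Fin k) (Fin n) K) (e : Fin k → Fin n)
    (he : LinearIndependent K fun i => G.col (e i)) (z : Fin n → K) :
    Function.Injective fun x : Fin k → K => G.mulVec (Function.extend e x z) := by
  classical
  have inj : Function.Injective e := fun i j h => he.injective (by simp [h])
  intro x y hxy
  have h0 : G.mulVec (Function.extend e x z - Function.extend e y z) = 0 := by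
    rw [Matrix.mulVec_sub]
    exact sub_eq_zero.mpr hxy
  have h1 : ∑ i, (x i - y i) • G.col (e i) = 0 := by
    rw [← h0]
    funext r
    simp only [Finset.sum_apply, Pi.smul_apply, smul_eq_mul, Matrix.col_apply, Matrix.mulVec,
      dotProduct, Pi.sub_apply]
    rw [← Finset.sum_subset (Finset.subset_univ (Finset.univ.image e)),
      Finset.sum_image inj.injOn]
    · simp [inj.extend_apply, mul_comm]
    · intro j _ hj
      simp [Function.extend_apply' _ _ _ (by simpa using hj : ¬ ∃ i, e i = j)]
  funext i
  exact sub_eq_zero.mp (Fintype.linearIndependent_iff.mp he _ h1 i)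

theorem map_uniformOfFintype_of_bijective {α : Type*} [Fintype α] [Nonempty α] (f : α → α)
    (hf : Function.Bijective f) :
    (PMF.uniformOfFintype α).map f = PMF.uniformOfFintype α := by
  classical
  ext b
  obtain ⟨a, rfl⟩ := hf.2 b
  simp [PMF.map_apply, hf.1.eq_iff]

/-- Degradation underlying "truncation is the best linear code" for testing `DSBS(p)`
versus `DSBS(1/2)` (for or against independence): for any full-row-rank `k × n` matrix `G`
over `ZMod 2` there is a channel `κ` mapping `Bern(p)^⊗k` to the law of `G Zⁿ` with
`Zⁿ ∼ Bern(p)^⊗n`, and mapping the uniform law on `(ZMod 2)ᵏ` to itself. -/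
theorem truncation_best_against_independence
    (p : ℝ) (hp : p ∈ Set.Icc (0 : ℝ) 1) (n k : ℕ)
    (G : Matrix (Fin k) (Fin n) (ZMod 2)) (hG : G.rank = k)
    (μ : PMF (Fin k → ZMod 2)) (hμ : ∀ z, μ z = bernMass p k z)
    (ν : PMF (Fin n → ZMod 2)) (hν : ∀ z, ν z = bernMass p n z) :
    ∃ κ : (Fin k → ZMod 2) → PMF (Fin k → ZMod 2),
      μ.bind κ = ν.map G.mulVec ∧
      (PMF.uniformOfFintype (Fin k → ZMod 2)).bind κ
        = PMF.uniformOfFintype (Fin k → ZMod 2) := by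
  obtain ⟨e, he⟩ := exists_independent_columns G hG
  have inj : Function.Injective e := fun i j h => he.injective (by simp [h])
  refine ⟨fun x => (ν.map (Function.extend e x)).map G.mulVec, ?_, ?_⟩
  · rw [← PMF.map_bind, bind_map_extend p e inj μ hμ ν hν]
  · -- Draw the noise first: conditionally on it, the channel permutes `Fin k → ZMod 2`.
    have key (z : Fin n → ZMod 2) :=
      map_uniformOfFintype_of_bijective _
        (Finite.injective_iff_bijective.mp (injective_mulVec_extend G e he z))
    simp only [PMF.map_comp]
    calc (PMF.uniformOfFintype (Fin k → ZMod 2)).bind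
            (fun x => ν.map (G.mulVec ∘ Function.extend e x))
        = ν.bind fun z => (PMF.uniformOfFintype (Fin k → ZMod 2)).map
            fun x => G.mulVec (Function.extend e x z) := PMF.bind_comm _ _ _
      _ = PMF.uniformOfFintype (Fin k → ZMod 2) := by simp only [key, PMF.bind_const]
end

section
/- Let p ∈ [0,1], let n, kX, kY ∈ ℕ, let G be a kX × n matrix and H a kY × n matrix over ZMod 2, and let k = min(rank G, rank H). Then there exists a channel κ : ((Fin k → ZMod 2) × (Fin k → ZMod 2)) → PMF ((Fin kX → ZMod 2) × (Fin kY → ZMod 2)) such that for each q ∈ {p, 1/2}, the pushforward through κ of DSBS(q)^⊗k equals the law of (G.mulVec x, H.mulVec y) under DSBS(q)^⊗n. (Truncation is the best linear code for testing DSBS(p) versus DSBS(1/2) and for testing DSBS(1/2) versus DSBS(p): (X^k, Y^k) is better in the Blackwell order than (G X^n, H Y^n).) -/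
/-! The channel `κ` keeps the `k` observed pairs, appends independent `DSBS(p)` pairs in the other
`n - k` coordinates (with the *fixed* parameter `p`), and applies `(G, H)`. By symmetry suppose
that `rank G ≤ rank H`, and place the `k` observed pairs in coordinates `S` that index a basis of
the column space of `G`.

For `q = p` the completed sequence is `DSBS(p)^⊗n`, so the output law is right. For `q = 1/2` the
entries of `X` on `S` are uniform and independent of everything else, and the columns of `G` in `S`
span its column space, so `G X` is uniform on that space whatever the values of `Y` and of `X`
outside `S`. Hence `G X` is independent of `H Y`, and `Y` is uniform. This describes the output law
without reference to the parameter used outside `S`, so that parameter may be replaced by `1/2`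
(`sum_eq_of_marginal`, `completed_sum_half`). -/


open scoped ENNReal

/-- The mass function of `DSBS(q)^⊗ι` for an arbitrary finite index type `ι`. -/
noncomputable def pairMass (q : ℝ) {ι : Type*} [Fintype ι] (x y : ι → ZMod 2) : ℝ≥0∞ :=
  ∏ i, (1 / 2 : ℝ≥0∞) * (if x i ≠ y i then ENNReal.ofReal q else ENNReal.ofReal (1 - q))

/-- The vector with entries `u` in the coordinates `e (inl i)` and `r` in the coordinates
`e (inr j)`. -/
def glue {n k : ℕ} {R : Type*} (e : Fin k ⊕ R ≃ Fin n) (u : Fin k → ZMod 2) (r : R → ZMod 2) :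
    Fin n → ZMod 2 :=
  Sum.elim u r ∘ e.symm

lemma glue_add {n k : ℕ} {R : Type*} (e : Fin k ⊕ R ≃ Fin n) (u u' : Fin k → ZMod 2)
    (r r' : R → ZMod 2) : glue e (u + u') (r + r') = glue e u r + glue e u' r' := by
  funext j
  simp only [glue, Function.comp_apply, Pi.add_apply]
  cases e.symm j <;> rfl

lemma pairMass_comm (q : ℝ) {ι : Type*} [Fintype ι] (x y : ι → ZMod 2) :
    pairMass q x y = pairMass q y x := by
  simp only [pairMass, ne_comm]

lemma pairMass_half {ι : Type*} [Fintype ι] (x y x' y' : ι → ZMod 2) :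
    pairMass (1 / 2) x y = pairMass (1 / 2) x' y' := by
  have h : (1 : ℝ) - 1 / 2 = 1 / 2 := by norm_num
  simp only [pairMass, h, ite_self]

lemma pairMass_glue (q : ℝ) {n k : ℕ} {R : Type*} [Fintype R] (e : Fin k ⊕ R ≃ Fin n)
    (u v : Fin k → ZMod 2) (r s : R → ZMod 2) :
    pairMass q (glue e u r) (glue e v s) = pairMass q u v * pairMass q r s := by
  unfold pairMass
  rw [← Equiv.prod_comp e, Fintype.prod_sum_type]
  simp [glue]

/-- Each marginal of `DSBS(q)^⊗ι` is uniform; here the first vector is fixed. -/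
lemma sum_pairMass (q : ℝ) (hq : q ∈ Set.Icc (0 : ℝ) 1) {ι : Type*} [Fintype ι] [DecidableEq ι]
    (x : ι → ZMod 2) : ∑ y, pairMass q x y = (1 / 2) ^ Fintype.card ι := by
  have hsum : ENNReal.ofReal q + ENNReal.ofReal (1 - q) = 1 := by
    rw [← ENNReal.ofReal_add hq.1 (by linarith [hq.2])]
    simp
  have h1 : ∀ a : ZMod 2, ∑ b : ZMod 2, (1 / 2 : ℝ≥0∞) *
      (if a ≠ b then ENNReal.ofReal q else ENNReal.ofReal (1 - q)) = 1 / 2 := by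
    intro a
    rw [← Finset.mul_sum]
    have : ∑ b : ZMod 2, (if a ≠ b then ENNReal.ofReal q else ENNReal.ofReal (1 - q)) = 1 := by
      have h2 : ∀ g : ZMod 2 → ℝ≥0∞, ∑ b, g b = g 0 + g 1 := fun g => Fin.sum_univ_two g
      rw [h2]
      have ha : a = 0 ∨ a = 1 := by revert a; decide
      rcases ha with rfl | rfl
      · simpa [add_comm] using hsum
      · simpa using hsum
    rw [this, mul_one]
  have h := Finset.prod_univ_sum (fun _ : ι => (Finset.univ : Finset (ZMod 2)))
    (fun i b => (1 / 2 : ℝ≥0∞) *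
      (if x i ≠ b then ENNReal.ofReal q else ENNReal.ofReal (1 - q)))
  simp only [h1, Finset.prod_const, Finset.card_univ, Fintype.piFinset_univ] at h
  exact h.symm

lemma sum_pairMass_eq_one (q : ℝ) (hq : q ∈ Set.Icc (0 : ℝ) 1) {ι : Type*} [Fintype ι]
    [DecidableEq ι] :
    ∑ rs : (ι → ZMod 2) × (ι → ZMod 2), pairMass q rs.1 rs.2 = 1 := by
  rw [Fintype.sum_prod_type]
  simp only [sum_pairMass q hq, Finset.sum_const, Finset.card_univ, Fintype.card_fun,
    ZMod.card, nsmul_eq_mul]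
  push_cast
  rw [← mul_pow, one_div, ENNReal.mul_inv_cancel (by norm_num) (by norm_num), one_pow]

/-- If the chance that a uniform `u` sends `A u r` to `g` does not depend on `r`, then the event
`A u r = g` decouples from `B v s = h` under any weight `m` on `(r, s)`, and only the marginal of
`m` in `s` matters. -/
lemma sum_eq_of_marginal {U R V S α β : Type*} [Fintype U] [Fintype R] [Fintype V] [Fintype S]
    [DecidableEq α] [DecidableEq β] (A : U → R → α) (B : V → S → β) (g : α) (h : β) (c C : ℝ≥0∞)
    (m : R → S → ℝ≥0∞) (hA : ∀ r, ∑ u, (if g = A u r then (1 : ℝ≥0∞) else 0) = c)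
    (hm : ∀ s, ∑ r, m r s = C) :
    ∑ u, ∑ v, ∑ r, ∑ s, (if g = A u r then (1 : ℝ≥0∞) else 0) * (if h = B v s then 1 else 0)
      * m r s = ∑ v, ∑ s, c * C * (if h = B v s then (1 : ℝ≥0∞) else 0) := by
  rw [Finset.sum_comm]
  refine Finset.sum_congr rfl fun v _ => ?_
  rw [Finset.sum_comm]
  calc _ = ∑ r, ∑ s, (∑ u, (if g = A u r then (1 : ℝ≥0∞) else 0)) *
        ((if h = B v s then 1 else 0) * m r s) := by
        refine Finset.sum_congr rfl fun r _ => ?_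
        rw [Finset.sum_comm]
        refine Finset.sum_congr rfl fun s _ => ?_
        rw [Finset.sum_mul]
        simp only [mul_assoc]
    _ = ∑ s, ∑ r, c * (if h = B v s then 1 else 0) * m r s := by
        rw [Finset.sum_comm]
        simp only [hA, mul_assoc]
    _ = _ := by
        refine Finset.sum_congr rfl fun s _ => ?_
        rw [← Finset.mul_sum, hm]
        ring

/-- If the coordinates `e (inl i)` already produce the whole range of `G`, then the number of
completions `u` with `G (u, r) = g` does not depend on `r`: changing `r` amounts to translating
`u`. -/
lemma count_glue_eq {n k m : ℕ} {R : Type*} (e : Fin k ⊕ R ≃ Fin n)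
    (G : Matrix (Fin m) (Fin n) (ZMod 2))
    (hG : ∀ v, ∃ u : Fin k → ZMod 2, G.mulVec (glue e u 0) = G.mulVec v) (g : Fin m → ZMod 2)
    (r : R → ZMod 2) :
    ∑ u, (if g = G.mulVec (glue e u r) then (1 : ℝ≥0∞) else 0) =
      ∑ u, (if g = G.mulVec (glue e u 0) then (1 : ℝ≥0∞) else 0) := by
  obtain ⟨d, hd⟩ := hG (glue e 0 r)
  rw [← Equiv.sum_comp (Equiv.addRight d)
    (fun u => if g = G.mulVec (glue e u 0) then (1 : ℝ≥0∞) else 0)]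
  refine Finset.sum_congr rfl fun u _ => ?_
  have h1 : glue e u r = glue e u 0 + glue e 0 r := by rw [← glue_add]; simp
  have h2 : glue e (u + d) 0 = glue e u 0 + glue e d 0 := by rw [← glue_add]; simp
  simp only [Equiv.coe_addRight, h1, h2, Matrix.mulVec_add, hd]

/-- With uniform pairs in the coordinates `e (inl i)`, the law of `(G X, H Y)` does not depend on
the parameter used in the remaining coordinates. -/
lemma completed_sum_half {n k kX kY : ℕ} {R : Type*} [Fintype R] [DecidableEq R]
    (e : Fin k ⊕ R ≃ Fin n)
    (G : Matrix (Fin kX) (Fin n) (ZMod 2)) (H : Matrix (Fin kY) (Fin n) (ZMod 2))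
    (hGH : (∀ v, ∃ u : Fin k → ZMod 2, G.mulVec (glue e u 0) = G.mulVec v) ∨
      (∀ v, ∃ u : Fin k → ZMod 2, H.mulVec (glue e u 0) = H.mulVec v))
    (g : Fin kX → ZMod 2) (h : Fin kY → ZMod 2) (q q' : ℝ) (hq : q ∈ Set.Icc (0 : ℝ) 1)
    (hq' : q' ∈ Set.Icc (0 : ℝ) 1) :
    ∑ u : Fin k → ZMod 2, ∑ v : Fin k → ZMod 2, ∑ r : R → ZMod 2, ∑ s : R → ZMod 2,
      (if g = G.mulVec (glue e u r) then (1 : ℝ≥0∞) else 0) *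
        (if h = H.mulVec (glue e v s) then 1 else 0) * (pairMass (1 / 2) u v * pairMass q r s) =
    ∑ u : Fin k → ZMod 2, ∑ v : Fin k → ZMod 2, ∑ r : R → ZMod 2, ∑ s : R → ZMod 2,
      (if g = G.mulVec (glue e u r) then (1 : ℝ≥0∞) else 0) *
        (if h = H.mulVec (glue e v s) then 1 else 0) *
          (pairMass (1 / 2) u v * pairMass q' r s) := by
  have hmass : ∀ u v : Fin k → ZMod 2, pairMass (1 / 2) u v =
      pairMass (1 / 2) (0 : Fin k → ZMod 2) 0 := fun u v => pairMass_half _ _ _ _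
  simp only [hmass]
  generalize pairMass (1 / 2) (0 : Fin k → ZMod 2) 0 = M
  have hC : ∀ t : ℝ, t ∈ Set.Icc (0 : ℝ) 1 → ∀ s : R → ZMod 2,
      ∑ r, M * pairMass t s r = M * (1 / 2) ^ Fintype.card R := by
    intro t ht s
    rw [← Finset.mul_sum, sum_pairMass t ht]
  rcases hGH with hG | hH
  · have key := fun (t : ℝ) (ht : t ∈ Set.Icc (0 : ℝ) 1) =>
      sum_eq_of_marginal (fun u r => G.mulVec (glue e u r)) (fun v s => H.mulVec (glue e v s)) g h
        _ _ (fun r s => M * pairMass t r s) (count_glue_eq e G hG g)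
        (fun s => by simpa only [pairMass_comm] using hC t ht s)
    exact (key q hq).trans (key q' hq').symm
  · have key := fun (t : ℝ) (ht : t ∈ Set.Icc (0 : ℝ) 1) =>
      sum_eq_of_marginal (fun v s => H.mulVec (glue e v s)) (fun u r => G.mulVec (glue e u r)) h g
        _ _ (fun s r => M * pairMass t r s) (count_glue_eq e H hH h) (fun r => hC t ht r)
    -- exchange the roles of the two components
    have swap : ∀ t : ℝ,
        ∑ u : Fin k → ZMod 2, ∑ v : Fin k → ZMod 2, ∑ r : R → ZMod 2, ∑ s : R → ZMod 2,
          (if g = G.mulVec (glue e u r) then (1 : ℝ≥0∞) else 0) *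
            (if h = H.mulVec (glue e v s) then 1 else 0) * (M * pairMass t r s) =
        ∑ v : Fin k → ZMod 2, ∑ u : Fin k → ZMod 2, ∑ s : R → ZMod 2, ∑ r : R → ZMod 2,
          (if h = H.mulVec (glue e v s) then (1 : ℝ≥0∞) else 0) *
            (if g = G.mulVec (glue e u r) then 1 else 0) * (M * pairMass t r s) := by
      intro t
      rw [Finset.sum_comm]
      refine Finset.sum_congr rfl fun v _ => Finset.sum_congr rfl fun u _ => ?_
      rw [Finset.sum_comm]
      refine Finset.sum_congr rfl fun s _ => Finset.sum_congr rfl fun r _ => ?_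
      rw [mul_comm (ite _ _ _)]
    rw [swap, swap]
    exact (key q hq).trans (key q' hq').symm

/-- Some `rank G` coordinates, those of a basis of columns, already produce the whole range of
`G`. -/
lemma exists_basis_columns {n m : ℕ} (G : Matrix (Fin m) (Fin n) (ZMod 2)) :
    ∃ (R : Type) (_ : Fintype R) (_ : DecidableEq R) (e : Fin G.rank ⊕ R ≃ Fin n),
      ∀ v, ∃ u : Fin G.rank → ZMod 2, G.mulVec (glue e u 0) = G.mulVec v := by
  classical
  rw [Matrix.rank_eq_finrank_span_cols]
  obtain ⟨b, hb, hspan, hli⟩ :=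
    Submodule.exists_fun_fin_finrank_span_eq (ZMod 2) (Set.range G.col)
  choose f hf using hb
  have hinj : Function.Injective f := fun i j hij => hli.injective (by rw [← hf i, ← hf j, hij])
  let e := (Equiv.sumCongr (Equiv.ofInjective f hinj) (Equiv.refl ↥(Set.range f)ᶜ)).trans
    (Equiv.Set.sumCompl (Set.range f))
  refine ⟨↥(Set.range f)ᶜ, inferInstance, inferInstance, e, fun v => ?_⟩
  have hv : G.mulVec v ∈ Submodule.span (ZMod 2) (Set.range b) := by
    rw [hspan, ← Matrix.range_mulVecLin]
    exact ⟨v, rfl⟩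
  obtain ⟨u, hu⟩ := (Submodule.mem_span_range_iff_exists_fun _).1 hv
  refine ⟨u, ?_⟩
  rw [← hu]
  funext i
  rw [Matrix.mulVec, dotProduct, ← Equiv.sum_comp e, Fintype.sum_sum_type]
  have he : ∀ j, b j = G.col (e (Sum.inl j)) := fun j => (hf j).symm
  simp only [glue, Function.comp_apply, Equiv.symm_apply_apply, Sum.elim_inl, Sum.elim_inr,
    Pi.zero_apply, mul_zero, Finset.sum_const_zero, add_zero, he, Finset.sum_apply,
    Pi.smul_apply, smul_eq_mul, Matrix.col_apply]
  exact Finset.sum_congr rfl fun j _ => mul_comm _ _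

/-- The channel that appends independent `DSBS(p)` pairs in the coordinates `e (inr j)` and then
applies `(G, H)` is a witness. -/
lemma exists_channel (p : ℝ) (hp : p ∈ Set.Icc (0 : ℝ) 1) {n kX kY k : ℕ}
    (G : Matrix (Fin kX) (Fin n) (ZMod 2)) (H : Matrix (Fin kY) (Fin n) (ZMod 2))
    {R : Type} [Fintype R] [DecidableEq R] (e : Fin k ⊕ R ≃ Fin n)
    (hGH : (∀ v, ∃ u : Fin k → ZMod 2, G.mulVec (glue e u 0) = G.mulVec v) ∨
      (∀ v, ∃ u : Fin k → ZMod 2, H.mulVec (glue e u 0) = H.mulVec v))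
    (μp μh : PMF ((Fin k → ZMod 2) × (Fin k → ZMod 2)))
    (hμp : ∀ xy, μp xy = dsbsMass p k xy)
    (hμh : ∀ xy, μh xy = dsbsMass (1 / 2) k xy)
    (νp νh : PMF ((Fin n → ZMod 2) × (Fin n → ZMod 2)))
    (hνp : ∀ xy, νp xy = dsbsMass p n xy)
    (hνh : ∀ xy, νh xy = dsbsMass (1 / 2) n xy) :
    ∃ κ : ((Fin k → ZMod 2) × (Fin k → ZMod 2)) →
        PMF ((Fin kX → ZMod 2) × (Fin kY → ZMod 2)),
      μp.bind κ = νp.map (fun xy => (G.mulVec xy.1, H.mulVec xy.2)) ∧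
      μh.bind κ = νh.map (fun xy => (G.mulVec xy.1, H.mulVec xy.2)) := by
  classical
  let η : PMF ((R → ZMod 2) × (R → ZMod 2)) :=
    PMF.ofFintype (fun rs => pairMass p rs.1 rs.2) (sum_pairMass_eq_one p hp)
  let κ : ((Fin k → ZMod 2) × (Fin k → ZMod 2)) → PMF ((Fin kX → ZMod 2) × (Fin kY → ZMod 2)) :=
    fun uv => η.map fun rs => (G.mulVec (glue e uv.1 rs.1), H.mulVec (glue e uv.2 rs.2))
  have hind : ∀ (g g' : Fin kX → ZMod 2) (h h' : Fin kY → ZMod 2) (c : ℝ≥0∞)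
      [Decidable ((g, h) = (g', h'))],
      (if (g, h) = (g', h') then c else 0) =
        (if g = g' then (1 : ℝ≥0∞) else 0) * (if h = h' then 1 else 0) * c := by
    intro g g' h h' c _
    by_cases h1 : g = g' <;> by_cases h2 : h = h' <;> simp [h1, h2]
  have hbind : ∀ (q : ℝ) (μ : PMF ((Fin k → ZMod 2) × (Fin k → ZMod 2))),
      (∀ xy, μ xy = dsbsMass q k xy) → ∀ g h, (μ.bind κ) (g, h) =
      ∑ u : Fin k → ZMod 2, ∑ v : Fin k → ZMod 2, ∑ r : R → ZMod 2, ∑ s : R → ZMod 2,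
        (if g = G.mulVec (glue e u r) then (1 : ℝ≥0∞) else 0) *
          (if h = H.mulVec (glue e v s) then 1 else 0) *
            (pairMass q u v * pairMass p r s) := by
    intro q μ hμ g h
    rw [PMF.bind_apply, tsum_fintype, Fintype.sum_prod_type]
    refine Finset.sum_congr rfl fun u _ => Finset.sum_congr rfl fun v _ => ?_
    rw [hμ, show dsbsMass q k (u, v) = pairMass q u v from rfl, PMF.map_apply, tsum_fintype,
      Fintype.sum_prod_type, Finset.mul_sum]
    refine Finset.sum_congr rfl fun r _ => ?_
    rw [Finset.mul_sum]
    refine Finset.sum_congr rfl fun s _ => ?_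
    rw [hind]
    simp only [η, PMF.ofFintype_apply]
    ring
  let E : (Fin n → ZMod 2) ≃ (Fin k → ZMod 2) × (R → ZMod 2) :=
    (Equiv.arrowCongr e.symm (Equiv.refl _)).trans (Equiv.sumArrowEquivProdArrow _ _ _)
  have hE : ∀ u r, E.symm (u, r) = glue e u r := fun u r => rfl
  have hmap : ∀ (q : ℝ) (ν : PMF ((Fin n → ZMod 2) × (Fin n → ZMod 2))),
      (∀ xy, ν xy = dsbsMass q n xy) → ∀ g h,
      (ν.map fun xy => (G.mulVec xy.1, H.mulVec xy.2)) (g, h) =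
      ∑ u : Fin k → ZMod 2, ∑ v : Fin k → ZMod 2, ∑ r : R → ZMod 2, ∑ s : R → ZMod 2,
        (if g = G.mulVec (glue e u r) then (1 : ℝ≥0∞) else 0) *
          (if h = H.mulVec (glue e v s) then 1 else 0) *
            (pairMass q u v * pairMass q r s) := by
    intro q ν hν g h
    rw [PMF.map_apply, tsum_fintype, Fintype.sum_prod_type, ← Equiv.sum_comp E.symm,
      Fintype.sum_prod_type]
    refine Finset.sum_congr rfl fun u _ => ?_
    rw [Finset.sum_comm]
    simp only [hE]
    rw [Finset.sum_comm]
    calc _ = ∑ r : R → ZMod 2, ∑ v : Fin k → ZMod 2, ∑ s : R → ZMod 2,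
          (if g = G.mulVec (glue e u r) then (1 : ℝ≥0∞) else 0) *
            (if h = H.mulVec (glue e v s) then 1 else 0) *
              (pairMass q u v * pairMass q r s) := by
          refine Finset.sum_congr rfl fun r _ => ?_
          rw [← Equiv.sum_comp E.symm, Fintype.sum_prod_type]
          refine Finset.sum_congr rfl fun v _ => Finset.sum_congr rfl fun s _ => ?_
          rw [hE, hind, hν, ← pairMass_glue]
          rfl
      _ = _ := Finset.sum_comm
  refine ⟨κ, ?_, ?_⟩
  · ext ⟨g, h⟩
    rw [hbind p μp hμp, hmap p νp hνp]
  · ext ⟨g, h⟩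
    rw [hbind _ μh hμh, hmap _ νh hνh]
    exact completed_sum_half e G H hGH g h p (1 / 2) hp (by constructor <;> norm_num)

/-- Truncation is the best linear code for testing `DSBS(p)` versus `DSBS(1/2)` (and
`DSBS(1/2)` versus `DSBS(p)`): with `k = min(rank G, rank H)`, the truncated observation
`(Xᵏ, Yᵏ)` is better in the Blackwell order than `(G Xⁿ, H Yⁿ)`, i.e. a single channel `κ`
maps `DSBS(q)^⊗k` to the law of `(G Xⁿ, H Yⁿ)` under `DSBS(q)^⊗n` for both `q = p` and
`q = 1/2`. -/
theorem truncation_best_linear_independence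
    (p : ℝ) (hp : p ∈ Set.Icc (0 : ℝ) 1) (n kX kY : ℕ)
    (G : Matrix (Fin kX) (Fin n) (ZMod 2)) (H : Matrix (Fin kY) (Fin n) (ZMod 2))
    (k : ℕ) (hk : k = min G.rank H.rank)
    (μp μh : PMF ((Fin k → ZMod 2) × (Fin k → ZMod 2)))
    (hμp : ∀ xy, μp xy = dsbsMass p k xy)
    (hμh : ∀ xy, μh xy = dsbsMass (1 / 2) k xy)
    (νp νh : PMF ((Fin n → ZMod 2) × (Fin n → ZMod 2)))
    (hνp : ∀ xy, νp xy = dsbsMass p n xy)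
    (hνh : ∀ xy, νh xy = dsbsMass (1 / 2) n xy) :
    ∃ κ : ((Fin k → ZMod 2) × (Fin k → ZMod 2)) →
        PMF ((Fin kX → ZMod 2) × (Fin kY → ZMod 2)),
      μp.bind κ = νp.map (fun xy => (G.mulVec xy.1, H.mulVec xy.2)) ∧
      μh.bind κ = νh.map (fun xy => (G.mulVec xy.1, H.mulVec xy.2)) := by
  rcases le_total G.rank H.rank with hle | hle
  · rw [min_eq_left hle] at hk
    subst hk
    obtain ⟨R, _, _, e, he⟩ := exists_basis_columns G
    exact exists_channel p hp G H e (Or.inl he) μp μh hμp hμh νp νh hνp hνh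
  · rw [min_eq_right hle] at hk
    subst hk
    obtain ⟨R, _, _, e, he⟩ := exists_basis_columns H
    exact exists_channel p hp G H e (Or.inr he) μp μh hμp hμh νp νh hνp hνh
end

section
/- Let p ∈ [0,1], let n ∈ ℕ, and let G be a k × n matrix over ZMod 2 with rank k (full row rank). Then there exists a channel κ : (Fin k → ZMod 2) → PMF (Fin k → ZMod 2) such that: (i) the pushforward through κ of Bern(p)^⊗k equals the pushforward of Bern(p)^⊗n under z ↦ G.mulVec z, and (ii) the pushforward through κ of Bern(1−p)^⊗k equals the pushforward of Bern(1−p)^⊗n under z ↦ G.mulVec z. (This is the degradation underlying the claim that, for testing DSBS(p) versus DSBS(1−p) — opposite signs of the same magnitude of correlation — truncation X^k ⊕ Y^k is better in the Blackwell order than G(X^n ⊕ Y^n) for any rank-k linear code G.) -/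
/-!
The law `Bern(1-p)^⊗n` is `Bern(p)^⊗n` translated by the all-ones vector. Hence if `S` is a set of
columns of `G` summing to zero, then the contribution `G_S Z_S` of these columns to `G Z` has the
same law under `p` and under `1-p`, and it is independent of the contribution of the other columns.

Take `S` of maximal cardinality among the sets of columns summing to zero. Over `ZMod 2` a linear
dependency among columns is a set of columns summing to zero, so by maximality the columns outside
`S` are linearly independent; in particular there are at most `k` of them, and there is an
injection `e : Sᶜ ↪ Fin k`. The channel feeds the bit `x (e j)` of its input `x` to each column
`j ∉ S`, and fresh `Bern(p)` bits to the columns in `S`. Under `p` this reproduces the law of `G Z`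
exactly; under `1-p` the fresh bits have the wrong sign, but that is invisible after applying `G`.

The two ingredients are `exists_zero_sum_embedding` (linear algebra) and `bern_marginal`
(a subfamily of i.i.d. bits is i.i.d.).
-/

open scoped ENNReal

/-- Coordinates of an i.i.d. family selected by an injection are again i.i.d.: the mass of the
event `u ∘ σ = w` under a product mass function is the product mass of `w`. -/
lemma sum_prod_marginal {ι κ : Type*} [Fintype ι] [DecidableEq ι] [Fintype κ]
    (f : ZMod 2 → ℝ≥0∞) (hf : ∑ a, f a = 1) (σ : κ → ι) (hσ : Function.Injective σ)
    (w : κ → ZMod 2) :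
    ∑ u : ι → ZMod 2, (if w = u ∘ σ then ∏ i, f (u i) else 0) = ∏ j, f (w j) := by
  classical
  -- The indicator of `u ∘ σ = w` is a product over the coordinates of `u`, so the sum factorizes.
  have h1 : ∀ u : ι → ZMod 2, (if w = u ∘ σ then ∏ i, f (u i) else 0)
      = ∏ i, (if ∀ j, σ j = i → w j = u i then f (u i) else 0) := by
    intro u
    split_ifs with h
    · refine Finset.prod_congr rfl fun i _ => ?_
      rw [if_pos]
      rintro j rfl
      exact congrFun h j
    · obtain ⟨j, hj⟩ := Function.ne_iff.1 h
      symm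
      refine Finset.prod_eq_zero (Finset.mem_univ (σ j)) (if_neg fun h' => hj (h' j rfl))
  simp_rw [h1]
  rw [← Fintype.prod_sum (fun i a => if ∀ j, σ j = i → w j = a then f a else 0)]
  symm
  refine Fintype.prod_of_injective σ hσ _ _ ?_ ?_
  · intro i hi
    rw [← hf]
    refine Finset.sum_congr rfl fun a _ => if_pos ?_
    rintro j rfl
    exact absurd ⟨j, rfl⟩ hi
  · intro j
    rw [Finset.sum_eq_single (w j)]
    · rw [if_pos]
      intro j' h
      rw [hσ h]
    · intro a _ ha
      exact if_neg fun h => ha (h j rfl).symm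
    · simp

/-- If `x ∼ Bern(p)^⊗k` and `z ∼ Bern(p)^⊗n` are independent, then selecting `n` distinct bits
among those of `x` and `z` yields `Bern(p)^⊗n`. -/
lemma bern_marginal {p : ℝ} (hp : p ∈ Set.Icc (0 : ℝ) 1) {n k : ℕ}
    {μ : PMF (Fin k → ZMod 2)} (hμ : ∀ z, μ z = bernMass p k z)
    {ν : PMF (Fin n → ZMod 2)} (hν : ∀ z, ν z = bernMass p n z)
    (σ : Fin n → Fin k ⊕ Fin n) (hσ : Function.Injective σ) :
    (μ.bind fun x => ν.map fun z => Sum.elim x z ∘ σ) = ν := by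
  classical
  set f : ZMod 2 → ℝ≥0∞ := fun a => if a = 1 then ENNReal.ofReal p else ENNReal.ofReal (1 - p)
    with hfdef
  have hf : ∑ a, f a = 1 := by
    have : ∑ a, f a = f 0 + f 1 := Fin.sum_univ_two f
    rw [this]
    simp only [hfdef, zero_ne_one, if_true, if_false]
    rw [← ENNReal.ofReal_add (by linarith [hp.2]) hp.1]
    simp
  ext w
  rw [hν, PMF.bind_apply, tsum_fintype]
  simp_rw [PMF.map_apply, tsum_fintype, Finset.mul_sum]
  rw [← Fintype.sum_prod_type', ← (Equiv.sumArrowEquivProdArrow _ _ _).sum_comp]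
  refine Eq.trans (Finset.sum_congr rfl fun u _ => ?_) (sum_prod_marginal f hf σ hσ w)
  have hu : Sum.elim ((Equiv.sumArrowEquivProdArrow _ _ _) u).1
      ((Equiv.sumArrowEquivProdArrow _ _ _) u).2 = u :=
    (Equiv.sumArrowEquivProdArrow _ _ _).symm_apply_apply u
  rw [hu, mul_ite, mul_zero, hμ, hν, Fintype.prod_sum_type]
  congr 1

/-- Flipping all bits exchanges `Bern(p)^⊗n` and `Bern(1-p)^⊗n`. -/
lemma bern_flip {p : ℝ} {n : ℕ} {νp νq : PMF (Fin n → ZMod 2)}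
    (hνp : ∀ z, νp z = bernMass p n z) (hνq : ∀ z, νq z = bernMass (1 - p) n z) :
    νp = νq.map (fun z => z + 1) := by
  classical
  have h2 : ∀ z : Fin n → ZMod 2, z + 1 + 1 = z := fun z => by
    funext i
    exact (by decide : ∀ a : ZMod 2, a + 1 + 1 = a) (z i)
  ext z
  rw [PMF.map_apply, tsum_eq_single (z + 1), if_pos (h2 z).symm, hνp, hνq]
  · unfold bernMass
    refine Finset.prod_congr rfl fun i _ => ?_
    rcases (by decide : ∀ a : ZMod 2, a = 0 ∨ a = 1) (z i) with h | h
    · simp [h]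
    · simp [h, (by decide : (1 + 1 : ZMod 2) ≠ 1)]
  · intro z' hz'
    refine if_neg fun h => hz' ?_
    rw [h, h2]

/-- A binary matrix with `k` rows has a set `S` of columns summing to zero such that at most `k`
columns remain outside `S`: a maximal such `S` leaves linearly independent columns. -/
lemma exists_zero_sum_embedding {n k : ℕ} (G : Matrix (Fin k) (Fin n) (ZMod 2)) :
    ∃ S : Finset (Fin n), ∑ j ∈ S, G.col j = 0 ∧ Nonempty ({j // j ∈ Sᶜ} ↪ Fin k) := by
  classical
  obtain ⟨S, hS, hmax⟩ := Finset.exists_max_image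
    (Finset.univ.filter fun S : Finset (Fin n) => ∑ j ∈ S, G.col j = 0) Finset.card
    ⟨∅, by simp⟩
  simp only [Finset.mem_filter, Finset.mem_univ, true_and] at hS hmax
  refine ⟨S, hS, ?_⟩
  have hli : LinearIndepOn (ZMod 2) G.col (Sᶜ : Finset (Fin n)) := by
    rw [linearIndepOn_finset_iff]
    intro f hf
    have hsum : ∑ j ∈ Sᶜ.filter (fun j => f j ≠ 0), G.col j = 0 := by
      rw [Finset.sum_filter]
      refine Eq.trans (Finset.sum_congr rfl fun j _ => ?_) hf
      rcases (by decide : ∀ a : ZMod 2, a = 0 ∨ a = 1) (f j) with h | h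
      · rw [if_neg (not_not.2 h), h, zero_smul]
      · rw [if_pos (by rw [h]; decide), h, one_smul]
    have hdisj : Disjoint S (Sᶜ.filter fun j => f j ≠ 0) :=
      Finset.disjoint_of_subset_right (Finset.filter_subset _ _) disjoint_compl_right
    have hcard := hmax (S ∪ Sᶜ.filter fun j => f j ≠ 0)
      (by rw [Finset.sum_union hdisj, hS, hsum, add_zero])
    rw [Finset.card_union_of_disjoint hdisj] at hcard
    have hempty : Sᶜ.filter (fun j => f j ≠ 0) = ∅ := Finset.card_eq_zero.1 (by omega)
    intro j hj
    by_contra hne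
    exact Finset.notMem_empty j (hempty ▸ Finset.mem_filter.2 ⟨hj, hne⟩)
  refine Function.Embedding.nonempty_of_card_le ?_
  have hcard : Fintype.card {j // j ∈ Sᶜ} ≤ Module.finrank (ZMod 2) (Fin k → ZMod 2) :=
    LinearIndependent.fintype_card_le_finrank (b := fun j : {j // j ∈ Sᶜ} => G.col j) hli
  rwa [Module.finrank_fin_fun, ← Fintype.card_fin k] at hcard

/-- Degradation underlying "truncation is the best linear code" for testing `DSBS(p)`
versus `DSBS(1-p)` (opposite signs of the same magnitude of correlation): for any
full-row-rank `k × n` matrix `G` over `ZMod 2` there is a single channel `κ` mapping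
`Bern(q)^⊗k` to the law of `G Zⁿ` with `Zⁿ ∼ Bern(q)^⊗n`, for both `q = p` and `q = 1-p`. -/
theorem truncation_best_opposite_correlations
    (p : ℝ) (hp : p ∈ Set.Icc (0 : ℝ) 1) (n k : ℕ)
    (G : Matrix (Fin k) (Fin n) (ZMod 2)) (hG : G.rank = k)
    (μp μq : PMF (Fin k → ZMod 2))
    (hμp : ∀ z, μp z = bernMass p k z)
    (hμq : ∀ z, μq z = bernMass (1 - p) k z)
    (νp νq : PMF (Fin n → ZMod 2))
    (hνp : ∀ z, νp z = bernMass p n z)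
    (hνq : ∀ z, νq z = bernMass (1 - p) n z) :
    ∃ κ : (Fin k → ZMod 2) → PMF (Fin k → ZMod 2),
      μp.bind κ = νp.map G.mulVec ∧
      μq.bind κ = νq.map G.mulVec := by
  classical
  obtain ⟨S, hS, ⟨e⟩⟩ := exists_zero_sum_embedding G
  -- Column `j ∈ S` reads a fresh bit, column `j ∉ S` reads bit `e j` of the channel input.
  let σ : Fin n → Fin k ⊕ Fin n := fun j => if h : j ∈ Sᶜ then Sum.inl (e ⟨j, h⟩) else Sum.inr j
  have hσ : Function.Injective σ := by
    intro i j hij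
    simp only [σ] at hij
    split_ifs at hij with hi hj hj
    · simpa using hij
    · simpa using hij
  have hinv : ∀ (x : Fin k → ZMod 2) (z : Fin n → ZMod 2),
      G.mulVec (Sum.elim x (z + 1) ∘ σ) = G.mulVec (Sum.elim x z ∘ σ) := by
    intro x z
    have h1 : Sum.elim x (z + 1) ∘ σ = Sum.elim x z ∘ σ + fun j => if j ∈ S then 1 else 0 := by
      funext j
      by_cases hj : j ∈ S <;> simp [σ, hj]
    have h2 : G.mulVec (fun j => if j ∈ S then 1 else 0) = 0 := by
      rw [← hS]
      funext i
      simp [Matrix.mulVec, dotProduct]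
    rw [h1, Matrix.mulVec_add, h2, add_zero]
  have key : ∀ (μ : PMF (Fin k → ZMod 2)) (ν : PMF (Fin n → ZMod 2)),
      (μ.bind fun x => ν.map fun z => Sum.elim x z ∘ σ) = ν →
      (μ.bind fun x => ν.map fun z => G.mulVec (Sum.elim x z ∘ σ)) = ν.map G.mulVec := by
    intro μ ν h
    conv_rhs => rw [← h, PMF.map_bind]
    simp_rw [PMF.map_comp]
    rfl
  refine ⟨fun x => νp.map fun z => G.mulVec (Sum.elim x z ∘ σ),
    key _ _ (bern_marginal hp hμp hνp σ hσ), ?_⟩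
  -- The fresh bits may be drawn from `Bern(1-p)` instead, without changing the channel.
  have hκ : ∀ x, (νp.map fun z => G.mulVec (Sum.elim x z ∘ σ))
      = νq.map fun z => G.mulVec (Sum.elim x z ∘ σ) := by
    intro x
    rw [bern_flip hνp hνq, PMF.map_comp]
    congr 1
    funext z
    exact hinv x z
  simp_rw [hκ]
  exact key _ _ (bern_marginal ⟨by linarith [hp.2], by linarith [hp.1]⟩ hμq hνq σ hσ)
end

section
/- Let p ∈ [0,1], let k, k_e, m ∈ ℕ with k_e ≤ k and n = k_e + m, and let G = [B C] be a k × n matrix over ZMod 2 whose left block B is the k × k_e matrix whose first k_e rows form the identity and whose remaining rows are zero, and whose right block C is a k × m matrix each of whose rows has an even number of ones. Then there exists a channel κ : (Fin k_e → ZMod 2) → PMF (Fin k → ZMod 2) such that: (i) the pushforward through κ of Bern(p)^⊗k_e equals the pushforward of Bern(p)^⊗n under z ↦ G.mulVec z, and (ii) the pushforward through κ of Bern(1−p)^⊗k_e equals the pushforward of Bern(1−p)^⊗n under z ↦ G.mulVec z. (This is the intermediate claim X^{k_e} ⊕ Y^{k_e} ⪰_B G(X^n ⊕ Y^n) in the proof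 that truncation is the best linear code for testing DSBS(p) versus DSBS(1−p); it uses that C annihilates the all-ones vector since its rows have even weight.) -/
/-!
The channel feeds its input `x` and an independent `W ∼ Bern(p)^⊗m` to `G`: it outputs `G (x, W)`.

For `Bern(p)^⊗k_e` this is correct because `Bern(q)^⊗(k_e + m)` is the law of a concatenation of
independent `Bern(q)^⊗k_e` and `Bern(q)^⊗m` blocks (`eq_bind_append_of_bernMass`).  For
`Bern(1-p)^⊗k_e` one would need `Bern(1-p)` noise instead of `Bern(p)` noise; but that noise is
`W + 1`, where `1` is the all-ones vector (`bernPMF_one_sub`), and `G (x, W + 1) = G (x, W)` because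
the rows of the right block have even weight (`mulVec_append_add_one`).
-/

open scoped ENNReal

lemma bernMass_sum (p : ℝ) (hp : p ∈ Set.Icc (0 : ℝ) 1) (n : ℕ) :
    ∑ z : Fin n → ZMod 2, bernMass p n z = 1 := by
  have h : ∑ a : ZMod 2, (if a = 1 then ENNReal.ofReal p else ENNReal.ofReal (1 - p)) = 1 := by
    change ∑ a : Fin 2, (if a = 1 then ENNReal.ofReal p else ENNReal.ofReal (1 - p)) = 1
    rw [Fin.sum_univ_two]
    simp only [zero_ne_one, if_false, if_true]
    rw [← ENNReal.ofReal_add (by linarith [hp.2]) hp.1]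
    simp
  unfold bernMass
  rw [← Fintype.piFinset_univ, ← Finset.prod_univ_sum (fun _ => Finset.univ)
    (fun (_ : Fin n) (a : ZMod 2) =>
      if a = 1 then ENNReal.ofReal p else ENNReal.ofReal (1 - p))]
  simp [h]

/-- `Bern(p)^⊗n` as a `PMF`. -/
noncomputable def bernPMF (p : ℝ) (hp : p ∈ Set.Icc (0 : ℝ) 1) (n : ℕ) :
    PMF (Fin n → ZMod 2) :=
  PMF.ofFintype (bernMass p n) (bernMass_sum p hp n)

lemma bernMass_append (p : ℝ) (a b : ℕ) (x : Fin a → ZMod 2) (w : Fin b → ZMod 2) :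
    bernMass p (a + b) (Fin.append x w) = bernMass p a x * bernMass p b w := by
  simp [bernMass, Fin.prod_univ_add]

/-- Complementing every bit exchanges `Bern(p)` and `Bern(1-p)`. -/
lemma bernMass_one_sub (p : ℝ) (n : ℕ) (w : Fin n → ZMod 2) :
    bernMass (1 - p) n w = bernMass p n (w + 1) := by
  unfold bernMass
  refine Finset.prod_congr rfl fun l _ => ?_
  rw [Pi.add_apply, Pi.one_apply]
  generalize w l = a
  have h : a = 0 ∨ a = 1 := by revert a; decide
  have h2 : (1 + 1 : ZMod 2) = 0 := by decide
  rcases h with rfl | rfl <;> simp [h2]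

lemma add_one_add_one {n : ℕ} (w : Fin n → ZMod 2) : w + 1 + 1 = w := by
  ext l
  simp [add_assoc, CharTwo.add_self_eq_zero]

/-- Adding the all-ones vector to `Bern(p)^⊗n` noise gives `Bern(1-p)^⊗n` noise. -/
lemma bernPMF_one_sub (p : ℝ) (hp : p ∈ Set.Icc (0 : ℝ) 1) (hq : 1 - p ∈ Set.Icc (0 : ℝ) 1)
    (n : ℕ) : bernPMF (1 - p) hq n = (bernPMF p hp n).map (· + 1) := by
  ext w
  rw [PMF.map_apply, tsum_eq_single (w + 1)]
  · simp [bernPMF, add_one_add_one, bernMass_one_sub]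
  · intro v hv
    rw [if_neg]
    rintro rfl
    exact hv (add_one_add_one v).symm

/-- Concatenating independent Bernoulli blocks of lengths `a` and `b` gives a Bernoulli block of
length `a + b`. -/
lemma eq_bind_append_of_bernMass (q : ℝ) (hq : q ∈ Set.Icc (0 : ℝ) 1) (a b : ℕ)
    (μ : PMF (Fin a → ZMod 2)) (hμ : ∀ z, μ z = bernMass q a z)
    (ν : PMF (Fin (a + b) → ZMod 2)) (hν : ∀ z, ν z = bernMass q (a + b) z) :
    ν = μ.bind fun x => (bernPMF q hq b).map (Fin.append x) := by
  ext z
  obtain ⟨⟨x, w⟩, rfl⟩ := (Fin.appendEquiv a b).surjective z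
  change ν (Fin.append x w) = (μ.bind _) (Fin.append x w)
  have hinj {x' : Fin a → ZMod 2} {w' : Fin b → ZMod 2}
      (h : Fin.append x w = Fin.append x' w') : x = x' ∧ w = w' :=
    Prod.ext_iff.mp ((Fin.appendEquiv a b).injective (a₁ := (x, w)) (a₂ := (x', w')) h)
  rw [PMF.bind_apply, tsum_eq_single x, PMF.map_apply, tsum_eq_single w]
  · simp [hμ, hν, bernPMF, bernMass_append]
  · intro w' hw
    exact if_neg fun h => hw (hinj h).2.symm
  · intro x' hx
    rw [PMF.map_apply, ENNReal.tsum_eq_zero.mpr, mul_zero]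
    intro w'
    exact if_neg fun h => hx (hinj h).1.symm

/-- A right block with rows of even weight annihilates the all-ones vector, so `G` does not see
a complementation of the last `m` bits. -/
lemma mulVec_append_add_one (k ke m : ℕ) (G : Matrix (Fin k) (Fin (ke + m)) (ZMod 2))
    (hC : ∀ i : Fin k,
      Even (Finset.univ.filter
        (fun j : Fin (ke + m) => ke ≤ (j : ℕ) ∧ G i j = 1)).card)
    (x : Fin ke → ZMod 2) (w : Fin m → ZMod 2) :
    G.mulVec (Fin.append x (w + 1)) = G.mulVec (Fin.append x w) := by
  have hsplit : Fin.append x (w + 1) = Fin.append x w + Fin.append 0 1 := by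
    ext j
    refine Fin.addCases (fun j => ?_) (fun j => ?_) j <;> simp
  have hzero : G.mulVec (Fin.append 0 1) = 0 := by
    ext i
    -- Modulo 2, the number of ones in the right part of row `i` is the sum of its entries.
    have hcard := (ZMod.natCast_eq_zero_iff_even).mpr (hC i)
    rw [Finset.card_filter, Nat.cast_sum, Fin.sum_univ_add] at hcard
    have hbit : ∀ a : ZMod 2, (if a = 1 then 1 else 0 : ZMod 2) = a := by decide
    have hleft (j : Fin ke) : ¬ ke ≤ (Fin.castAdd m j : ℕ) := by simp
    simpa only [Matrix.mulVec, dotProduct, Fin.sum_univ_add, Nat.cast_ite, Nat.cast_one,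
      Nat.cast_zero, hleft, false_and, if_false, Fin.val_natAdd, Nat.le_add_right, true_and, hbit,
      Finset.sum_const_zero, zero_add, Fin.append_left, Fin.append_right, Pi.zero_apply,
      Pi.one_apply, mul_zero, mul_one] using hcard
  rw [hsplit, Matrix.mulVec_add, hzero, add_zero]

/-- Intermediate claim `X^{k_e} ⊕ Y^{k_e} ⪰_B G(Xⁿ ⊕ Yⁿ)` in the proof that truncation is
the best linear code for testing `DSBS(p)` versus `DSBS(1-p)`.  Here `G = [B C]` with `B`
the `k × k_e` matrix whose first `k_e` rows form the identity and whose remaining rows are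
zero, and `C` a `k × m` matrix all of whose rows have even weight.  A single channel `κ`
maps `Bern(q)^{⊗k_e}` to the law of `G Zⁿ`, `Zⁿ ∼ Bern(q)^⊗n`, for `q = p` and `q = 1-p`. -/
theorem truncation_dominates_even_weight_block
    (p : ℝ) (hp : p ∈ Set.Icc (0 : ℝ) 1) (k ke m : ℕ) (hke : ke ≤ k)
    (G : Matrix (Fin k) (Fin (ke + m)) (ZMod 2))
    (hB : ∀ (i : Fin k) (j : Fin (ke + m)), (j : ℕ) < ke →
      G i j = if (i : ℕ) = (j : ℕ) then 1 else 0)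
    (hC : ∀ i : Fin k,
      Even (Finset.univ.filter
        (fun j : Fin (ke + m) => ke ≤ (j : ℕ) ∧ G i j = 1)).card)
    (μp μq : PMF (Fin ke → ZMod 2))
    (hμp : ∀ z, μp z = bernMass p ke z)
    (hμq : ∀ z, μq z = bernMass (1 - p) ke z)
    (νp νq : PMF (Fin (ke + m) → ZMod 2))
    (hνp : ∀ z, νp z = bernMass p (ke + m) z)
    (hνq : ∀ z, νq z = bernMass (1 - p) (ke + m) z) :
    ∃ κ : (Fin ke → ZMod 2) → PMF (Fin k → ZMod 2),
      μp.bind κ = νp.map G.mulVec ∧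
      μq.bind κ = νq.map G.mulVec := by
  have hq : 1 - p ∈ Set.Icc (0 : ℝ) 1 := ⟨by linarith [hp.2], by linarith [hp.1]⟩
  refine ⟨fun x => (bernPMF p hp m).map fun w => G.mulVec (Fin.append x w), ?_, ?_⟩
  · rw [eq_bind_append_of_bernMass p hp ke m μp hμp νp hνp, PMF.map_bind]
    simp only [PMF.map_comp]
    rfl
  · rw [eq_bind_append_of_bernMass (1 - p) hq ke m μq hμq νq hνq, PMF.map_bind,
      bernPMF_one_sub p hp hq]
    simp only [PMF.map_comp, Function.comp_def, mulVec_append_add_one k ke m G hC]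
end

section
/- Let p0, p1 ∈ [0,1] with p0 ≠ p1. Then the following are equivalent: (a) for every nonzero 1 × 2 matrix G over ZMod 2, there exists a channel κ : ZMod 2 → PMF (ZMod 2) such that for each i ∈ {0,1}, the pushforward through κ of the Bernoulli(p_i) PMF on ZMod 2 equals the pushforward of Bern(p_i)^⊗2 under z ↦ G.mulVec z; (b) 2·p0·p1 ≤ 1 and 2·(1 − p0)·(1 − p1) ≤ 1. Equivalently, there exist w0, w1 ∈ [0,1] with (1 − p_i)·w0 + p_i·w1 = 2·p_i·(1 − p_i) for i = 0,1 if and only if 2·p0·p1 ≤ 1 and 2·(1 − p0)·(1 − p1) ≤ 1 (the feasible weights being w0 = 2·p0·p1 and w1 = 2·(1 − p0)·(1 − p1)). (This identifies the exact region where truncation X^1 ⊕ Y^1 Blackwell-dominates G(X^2 ⊕ Y^2) for all rank-1 codes G, bounded by the hyperbola 2·p0·p1 = 1 and its reflection about p0 + p1 = 1.) -/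
/-!
A channel on a bit is a pair of weights `(w₀, w₁) ∈ [0,1]²`, where `w_a = κ(a)(1)`, and a law on a
bit is determined by its mass at `1`. So the channel `κ` sends `Bern(p)` to the law of `G z` exactly
when `(1 - p) w₀ + p w₁` is the probability that `G z = 1`.

For `G = (1, 0)` and `G = (0, 1)` this probability is `p`, and the identity channel works. Only
`G = (1, 1)` is a constraint: there the probability is `2 p (1 - p)`. Requiring the equation at two
distinct values `p₀ ≠ p₁` gives a nonsingular linear system with unique solution `w₀ = 2 p₀ p₁`,
`w₁ = 2 (1 - p₀) (1 - p₁)`. Both are nonnegative, so admissibility is `w₀ ≤ 1` and `w₁ ≤ 1`.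
-/

open scoped ENNReal

/-- The linear system for the weights is nonsingular when `p₀ ≠ p₁`, and this is its solution. -/
lemma weights_unique {p0 p1 w0 w1 : ℝ} (hne : p0 ≠ p1)
    (h0 : (1 - p0) * w0 + p0 * w1 = 2 * p0 * (1 - p0))
    (h1 : (1 - p1) * w0 + p1 * w1 = 2 * p1 * (1 - p1)) :
    w0 = 2 * p0 * p1 ∧ w1 = 2 * (1 - p0) * (1 - p1) := by
  have hd : p1 - p0 ≠ 0 := sub_ne_zero.mpr hne.symm
  constructor
  · apply mul_left_cancel₀ hd
    linear_combination p1 * h0 - p0 * h1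
  · apply mul_left_cancel₀ hd
    linear_combination (1 - p0) * h1 - (1 - p1) * h0

lemma weights_iff {p0 p1 : ℝ} (hp0 : p0 ∈ Set.Icc (0 : ℝ) 1) (hp1 : p1 ∈ Set.Icc (0 : ℝ) 1)
    (hne : p0 ≠ p1) :
    (∃ w0 ∈ Set.Icc (0 : ℝ) 1, ∃ w1 ∈ Set.Icc (0 : ℝ) 1,
        (1 - p0) * w0 + p0 * w1 = 2 * p0 * (1 - p0) ∧
        (1 - p1) * w0 + p1 * w1 = 2 * p1 * (1 - p1)) ↔
      (2 * p0 * p1 ≤ 1 ∧ 2 * (1 - p0) * (1 - p1) ≤ 1) := by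
  obtain ⟨h0, h0'⟩ := hp0
  obtain ⟨h1, h1'⟩ := hp1
  constructor
  · rintro ⟨w0, hw0, w1, hw1, e0, e1⟩
    obtain ⟨rfl, rfl⟩ := weights_unique hne e0 e1
    exact ⟨hw0.2, hw1.2⟩
  · rintro ⟨a, b⟩
    have h2 : 0 ≤ 1 - p0 := by linarith
    have h3 : 0 ≤ 1 - p1 := by linarith
    exact ⟨_, ⟨by positivity, a⟩, _, ⟨by positivity, b⟩, by ring, by ring⟩

/-- The Bernoulli law on `ZMod 2` with mass `w` at `1`. -/
noncomputable def bitPMF (w : ℝ) (hw : w ∈ Set.Icc (0 : ℝ) 1) : PMF (ZMod 2) :=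
  PMF.ofFintype (fun b => if b = 1 then ENNReal.ofReal w else ENNReal.ofReal (1 - w)) (by
    have h : (Finset.univ : Finset (ZMod 2)) = {0, 1} := rfl
    rw [h, Finset.sum_pair (by decide), if_neg (by decide), if_pos rfl,
      ← ENNReal.ofReal_add (by linarith [hw.2]) hw.1]
    simp)

lemma bitPMF_one (w : ℝ) (hw : w ∈ Set.Icc (0 : ℝ) 1) : bitPMF w hw 1 = ENNReal.ofReal w := by
  simp [bitPMF]

lemma pmf_bit_sum (μ : PMF (ZMod 2)) : μ 0 + μ 1 = 1 := by
  have h := μ.tsum_coe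
  have hu : (Finset.univ : Finset (ZMod 2)) = {0, 1} := rfl
  rwa [tsum_fintype, hu, Finset.sum_pair (by decide)] at h

/-- A law on a bit is determined by its mass at `1`. -/
lemma pmf_bit_ext {μ ν : PMF (ZMod 2)} (h : (μ 1).toReal = (ν 1).toReal) : μ = ν := by
  have h1 : μ 1 = ν 1 := (ENNReal.toReal_eq_toReal_iff' (μ.apply_ne_top 1) (ν.apply_ne_top 1)).1 h
  have h0 : μ 0 = ν 0 := by
    have e : μ 0 + μ 1 = ν 0 + μ 1 := by rw [pmf_bit_sum, h1, pmf_bit_sum]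
    exact (ENNReal.add_left_inj (μ.apply_ne_top 1)).1 e
  ext b
  fin_cases b
  exacts [h0, h1]

lemma bind_channel_one {p : ℝ} (hp : p ∈ Set.Icc (0 : ℝ) 1) (β : PMF (ZMod 2))
    (hβ : ∀ b, β b = if b = 1 then ENNReal.ofReal p else ENNReal.ofReal (1 - p))
    (κ : ZMod 2 → PMF (ZMod 2)) :
    ((β.bind κ) 1).toReal = (1 - p) * (κ 0 1).toReal + p * (κ 1 1).toReal := by
  have hu : (Finset.univ : Finset (ZMod 2)) = {0, 1} := rfl
  rw [PMF.bind_apply, tsum_fintype, hu, Finset.sum_pair (by decide), hβ, hβ,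
    if_neg (by decide), if_pos rfl, ENNReal.toReal_add, ENNReal.toReal_mul, ENNReal.toReal_mul,
    ENNReal.toReal_ofReal (by linarith [hp.2]), ENNReal.toReal_ofReal hp.1]
  · exact ENNReal.mul_ne_top ENNReal.ofReal_ne_top ((κ 0).apply_ne_top 1)
  · exact ENNReal.mul_ne_top ENNReal.ofReal_ne_top ((κ 1).apply_ne_top 1)

/-- The law of `G z` puts mass `2 p (1 - p)` on `1` if `G = (1, 1)`, and mass `p` for the other two
nonzero codes. -/
lemma map_code_one {p : ℝ} (hp : p ∈ Set.Icc (0 : ℝ) 1) (ν : PMF (Fin 2 → ZMod 2))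
    (hν : ∀ z, ν z = bernMass p 2 z) (G : Matrix (Fin 1) (Fin 2) (ZMod 2)) (hG : G ≠ 0) :
    ((ν.map (fun z => G.mulVec z 0)) 1).toReal =
      if G 0 0 = 1 ∧ G 0 1 = 1 then 2 * p * (1 - p) else p := by
  have hu : (Finset.univ : Finset (ZMod 2)) = {0, 1} := rfl
  have h2 : 0 ≤ 1 - p := by linarith [hp.2]
  have key : ((ν.map (fun z => G.mulVec z 0)) 1) =
      ∑ a : ZMod 2, ∑ b : ZMod 2, if 1 = G 0 0 * a + G 0 1 * b then
        bernMass p 2 ![a, b] else 0 := by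
    rw [PMF.map_apply, tsum_fintype, ← (finTwoArrowEquiv (ZMod 2)).symm.sum_comp,
      Fintype.sum_prod_type]
    simp [hν, Matrix.mulVec, dotProduct, Fin.sum_univ_two]
  have hb : ∀ a b : ZMod 2, bernMass p 2 ![a, b] =
      ENNReal.ofReal ((if a = 1 then p else 1 - p) * (if b = 1 then p else 1 - p)) := by
    intro a b
    rw [ENNReal.ofReal_mul (by split_ifs <;> [exact hp.1; exact h2])]
    simp only [bernMass, Fin.prod_univ_two, apply_ite ENNReal.ofReal]
    rfl
  have hp0 := hp.1
  have h01 : (0 : ZMod 2) ≠ 1 := by decide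
  have h11 : (1 : ZMod 2) + 1 = 0 := by decide
  have hcases : ∀ x : ZMod 2, x = 0 ∨ x = 1 := by decide
  rw [key, hu]
  simp only [Finset.sum_pair h01, hb]
  rcases hcases (G 0 0) with ha | ha <;> rcases hcases (G 0 1) with hc | hc
  · exfalso
    apply hG
    ext i j
    fin_cases i
    fin_cases j
    exacts [ha, hc]
  all_goals
    simp only [ha, hc]
    simp [h11, ENNReal.toReal_add, ENNReal.mul_ne_top, hp0, hp.2]
    ring

/-- Exact region where truncation `X¹ ⊕ Y¹` Blackwell-dominates `G(X² ⊕ Y²)` for all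
nonzero `1 × 2` codes `G` (identifying `Fin 1 → ZMod 2` with `ZMod 2` via evaluation at
`0`): this happens iff `2 p₀ p₁ ≤ 1` and `2 (1-p₀)(1-p₁) ≤ 1`.  Equivalently, weights
`w₀, w₁ ∈ [0,1]` with `(1-pᵢ) w₀ + pᵢ w₁ = 2 pᵢ (1-pᵢ)` for `i = 0, 1` exist iff
`2 p₀ p₁ ≤ 1` and `2 (1-p₀)(1-p₁) ≤ 1`. -/
theorem truncation_region_k1_n2
    (p0 p1 : ℝ) (hp0 : p0 ∈ Set.Icc (0 : ℝ) 1) (hp1 : p1 ∈ Set.Icc (0 : ℝ) 1)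
    (hne : p0 ≠ p1)
    (β0 β1 : PMF (ZMod 2))
    (hβ0 : ∀ b, β0 b = if b = 1 then ENNReal.ofReal p0 else ENNReal.ofReal (1 - p0))
    (hβ1 : ∀ b, β1 b = if b = 1 then ENNReal.ofReal p1 else ENNReal.ofReal (1 - p1))
    (ν0 ν1 : PMF (Fin 2 → ZMod 2))
    (hν0 : ∀ z, ν0 z = bernMass p0 2 z)
    (hν1 : ∀ z, ν1 z = bernMass p1 2 z) :
    ((∀ G : Matrix (Fin 1) (Fin 2) (ZMod 2), G ≠ 0 →
        ∃ κ : ZMod 2 → PMF (ZMod 2),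
          β0.bind κ = ν0.map (fun z => G.mulVec z 0) ∧
          β1.bind κ = ν1.map (fun z => G.mulVec z 0)) ↔
      (2 * p0 * p1 ≤ 1 ∧ 2 * (1 - p0) * (1 - p1) ≤ 1)) ∧
    ((∃ w0 ∈ Set.Icc (0 : ℝ) 1, ∃ w1 ∈ Set.Icc (0 : ℝ) 1,
        (1 - p0) * w0 + p0 * w1 = 2 * p0 * (1 - p0) ∧
        (1 - p1) * w0 + p1 * w1 = 2 * p1 * (1 - p1)) ↔
      (2 * p0 * p1 ≤ 1 ∧ 2 * (1 - p0) * (1 - p1) ≤ 1)) := by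
  refine ⟨?_, weights_iff hp0 hp1 hne⟩
  rw [← weights_iff hp0 hp1 hne]
  constructor
  · intro h
    have hG : (fun _ _ => 1 : Matrix (Fin 1) (Fin 2) (ZMod 2)) ≠ 0 := fun e =>
      absurd (congrFun (congrFun e 0) 0) (by decide)
    obtain ⟨κ, e0, e1⟩ := h _ hG
    have hκ : ∀ a, (κ a 1).toReal ∈ Set.Icc (0 : ℝ) 1 := fun a =>
      ⟨ENNReal.toReal_nonneg, ENNReal.toReal_le_of_le_ofReal zero_le_one
        (by simpa using (κ a).coe_le_one 1)⟩
    refine ⟨_, hκ 0, _, hκ 1, ?_, ?_⟩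
    · rw [← bind_channel_one hp0 β0 hβ0 κ, e0, map_code_one hp0 ν0 hν0 _ hG, if_pos ⟨rfl, rfl⟩]
    · rw [← bind_channel_one hp1 β1 hβ1 κ, e1, map_code_one hp1 ν1 hν1 _ hG, if_pos ⟨rfl, rfl⟩]
  · rintro ⟨w0, hw0, w1, hw1, e0, e1⟩ G hG
    by_cases hc : G 0 0 = 1 ∧ G 0 1 = 1
    · refine ⟨fun a => if a = 1 then bitPMF w1 hw1 else bitPMF w0 hw0,
        pmf_bit_ext ?_, pmf_bit_ext ?_⟩
      · rw [bind_channel_one hp0 β0 hβ0, map_code_one hp0 ν0 hν0 G hG, if_pos hc, ← e0]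
        simp [bitPMF_one, hw0.1, hw1.1]
      · rw [bind_channel_one hp1 β1 hβ1, map_code_one hp1 ν1 hν1 G hG, if_pos hc, ← e1]
        simp [bitPMF_one, hw0.1, hw1.1]
    · -- `G z` is a single coordinate of `z`, so the identity channel works.
      refine ⟨PMF.pure, pmf_bit_ext ?_, pmf_bit_ext ?_⟩
      · rw [PMF.bind_pure, map_code_one hp0 ν0 hν0 G hG, if_neg hc, hβ0, if_pos rfl,
          ENNReal.toReal_ofReal hp0.1]
      · rw [PMF.bind_pure, map_code_one hp1 ν1 hν1 G hG, if_neg hc, hβ1, if_pos rfl,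
          ENNReal.toReal_ofReal hp1.1]
end

section
/- Let p0, p1 ∈ [0,1] with p0 ≠ p1. Then the following are equivalent: (a) for every 2 × 3 matrix G over ZMod 2 of rank 2, there exists a channel κ : (Fin 2 → ZMod 2) → PMF (Fin 2 → ZMod 2) such that for each i ∈ {0,1}, the pushforward through κ of Bern(p_i)^⊗2 equals the pushforward of Bern(p_i)^⊗3 under z ↦ G.mulVec z; (b) p0 + p1 ≥ 3·p0·p1 and (1 − p0) + (1 − p1) ≥ 3·(1 − p0)·(1 − p1). (This identifies the exact region where truncation X^2 ⊕ Y^2 Blackwell-dominates G(X^3 ⊕ Y^3) for all rank-2 codes G, bounded by the hyperbola p0 + p1 = 3·p0·p1 and its reflection about p0 + p1 = 1.) -/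
/-!
Every `2 × 3` matrix `G` over `ZMod 2` kills some `v ≠ 0`. If `v j = 1`, then
`G z = G (z + z_j v)`, and the `j`-th coordinate of `z + z_j v` is zero, so `G z` is a function of
the remaining two coordinates `z_k + z_j v_k` (`reduce` below, with `w` the restriction of `v` to
`k ≠ j`). It therefore suffices to simulate `reduce j w`, whose law under `Bern(p)^⊗3` is
`y ↦ (1 - p) Bern(p)^⊗2(y) + p Bern(p)^⊗2(y + w)`, independently of `j` (`map_reduce_toReal`).

Write `A = p₀ p₁`, `B = (1 - p₀)(1 - p₁)`, `s = p₀(1 - p₁) + p₁(1 - p₀)`, so `A + s + B = 1`; the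
inequalities of the theorem say exactly `A ≤ s` and `B ≤ s`.

* `w = 0`: the identity channel works.
* `w` of weight one: one bit has to be pushed from `Bern(p)` to `Bern(2p(1-p))` for `p = p₀, p₁`.
  Sending `0, 1` to a one with probabilities `2A, 2B` does this, and `A, B ≤ 1/2` holds because
  `A, B ≤ s`.
* `w = (1,1)`: the target is zero with probability `1 - 3p(1-p)` and uniform on the three nonzero
  vectors otherwise. Nonzero output probabilities `A/s, 1, 1, B/s` on inputs `00, 01, 10, 11` work.

Conversely, for the `G` with `w = (1,1)`, let `a, b₁, b₂, c ∈ [0,1]` be the probabilities of a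
nonzero output on inputs `00, 01, 10, 11`. The constraints
`a (1-p)² + (b₁ + b₂) p(1-p) + c p² = 3p(1-p)` at `p = p₀, p₁` give, by elimination and `p₀ ≠ p₁`,
`a s = (3 - b₁ - b₂) A` and `c s = (3 - b₁ - b₂) B`, whence `A ≤ a s ≤ s` and `B ≤ c s ≤ s`.
-/

open scoped ENNReal

/-- The real-valued mass function of `Bern(p)^⊗n`. -/
noncomputable def bernReal (p : ℝ) (n : ℕ) (z : Fin n → ZMod 2) : ℝ :=
  ∏ ℓ : Fin n, (if z ℓ = 1 then p else 1 - p)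

lemma bernMass_toReal {p : ℝ} (hp : p ∈ Set.Icc (0 : ℝ) 1) (n : ℕ) (z : Fin n → ZMod 2) :
    (bernMass p n z).toReal = bernReal p n z := by
  unfold bernMass bernReal
  rw [ENNReal.toReal_prod]
  refine Finset.prod_congr rfl fun ℓ _ => ?_
  split_ifs
  · exact ENNReal.toReal_ofReal hp.1
  · exact ENNReal.toReal_ofReal (sub_nonneg.2 hp.2)

lemma pmf_ext_toReal {α : Type*} {P Q : PMF α} (h : ∀ y, (P y).toReal = (Q y).toReal) :
    P = Q := by
  ext y
  exact (ENNReal.toReal_eq_toReal_iff' (P.apply_ne_top y) (Q.apply_ne_top y)).1 (h y)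

lemma bind_toReal {α β : Type*} [Fintype α] (P : PMF α) (κ : α → PMF β) (y : β) :
    (P.bind κ y).toReal = ∑ x, (P x).toReal * (κ x y).toReal := by
  rw [PMF.bind_apply, tsum_fintype, ENNReal.toReal_sum]
  · simp [ENNReal.toReal_mul]
  · intro x _
    exact ENNReal.mul_ne_top (P.apply_ne_top x) ((κ x).apply_ne_top y)

/-- A row-stochastic real matrix is a channel. -/
lemma exists_channel_s11 {α β : Type*} [Fintype β] (k : α → β → ℝ)
    (h0 : ∀ x y, 0 ≤ k x y) (h1 : ∀ x, ∑ y, k x y = 1) :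
    ∃ κ : α → PMF β, ∀ x y, (κ x y).toReal = k x y := by
  refine ⟨fun x => PMF.ofFintype (fun y => ENNReal.ofReal (k x y)) ?_, fun x y => ?_⟩
  · rw [← ENNReal.ofReal_sum_of_nonneg fun y _ => h0 x y, h1, ENNReal.ofReal_one]
  · simp [PMF.ofFintype_apply, ENNReal.toReal_ofReal (h0 x y)]

lemma sum_vec2 (f : (Fin 2 → ZMod 2) → ℝ) :
    ∑ x, f x = f ![0, 0] + f ![0, 1] + f ![1, 0] + f ![1, 1] := by
  rw [← Equiv.sum_comp (finTwoArrowEquiv (ZMod 2)).symm f, Fintype.sum_prod_type]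
  have h (g : ZMod 2 → ℝ) : ∑ t, g t = g 0 + g 1 := Fin.sum_univ_two g
  simp only [h, finTwoArrowEquiv_symm_apply]
  ring

lemma forall_vec2 {P : (Fin 2 → ZMod 2) → Prop} (h00 : P ![0, 0]) (h01 : P ![0, 1])
    (h10 : P ![1, 0]) (h11 : P ![1, 1]) (x : Fin 2 → ZMod 2) : P x := by
  have : x = ![0, 0] ∨ x = ![0, 1] ∨ x = ![1, 0] ∨ x = ![1, 1] := by
    revert x; decide
  rcases this with rfl | rfl | rfl | rfl <;> assumption

/-- The coordinates other than `j` of `z + z_j v`, where `v` is the vector with `v j = 1` and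
remaining coordinates `w`. This is a quotient map by the line spanned by `v`. -/
def reduce (j : Fin 3) (w : Fin 2 → ZMod 2) (z : Fin 3 → ZMod 2) : Fin 2 → ZMod 2 :=
  fun k => z (j.succAbove k) + z j * w k

lemma map_reduce_toReal {p : ℝ} (hp : p ∈ Set.Icc (0 : ℝ) 1) {ν : PMF (Fin 3 → ZMod 2)}
    (hν : ∀ z, ν z = bernMass p 3 z) (j : Fin 3) (w y : Fin 2 → ZMod 2) :
    (ν.map (reduce j w) y).toReal = (1 - p) * bernReal p 2 y + p * bernReal p 2 (y + w) := by
  have h2 (g : ZMod 2 → ℝ) : ∑ t, g t = g 0 + g 1 := Fin.sum_univ_two g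
  have hchar (u : Fin 2 → ZMod 2) : (y = fun k => u k + w k) ↔ u = y + w := by
    revert u w y; decide
  have hprod (t : ZMod 2) (u : Fin 2 → ZMod 2) :
      bernReal p 3 (j.insertNth t u) = (if t = 1 then p else 1 - p) * bernReal p 2 u := by
    simp only [bernReal]
    rw [Fin.prod_univ_succAbove _ j]
    simp
  have hred (t : ZMod 2) (u : Fin 2 → ZMod 2) :
      y = reduce j w (j.insertNth t u) ↔ y = fun k => u k + t * w k := by
    have : reduce j w (j.insertNth t u) = fun k => u k + t * w k := by
      funext k
      rw [reduce, Fin.insertNth_apply_same, Fin.insertNth_apply_succAbove]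
    rw [this]
  have hequiv (t : ZMod 2) (u : Fin 2 → ZMod 2) :
      Fin.insertNthEquiv (fun _ => ZMod 2) j (t, u) = j.insertNth t u := rfl
  rw [PMF.map, bind_toReal, ← Equiv.sum_comp (Fin.insertNthEquiv (fun _ => ZMod 2) j),
    Fintype.sum_prod_type, h2]
  simp only [hequiv, hν, bernMass_toReal hp, hprod, Function.comp_apply,
    PMF.pure_apply, hred, zero_mul, one_mul, add_zero, hchar]
  simp [apply_ite ENNReal.toReal]

/-- Any linear image in dimension two of a three-bit vector factors through some `reduce j w`. -/
lemma exists_factor (G : Matrix (Fin 2) (Fin 3) (ZMod 2)) :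
    ∃ j w, ∃ e : (Fin 2 → ZMod 2) → (Fin 2 → ZMod 2), G.mulVec = e ∘ reduce j w := by
  have hker : LinearMap.ker G.mulVecLin ≠ ⊥ :=
    LinearMap.ker_ne_bot_of_finrank_lt (by simp)
  obtain ⟨v, hv, hv0⟩ := (Submodule.ne_bot_iff _).1 hker
  obtain ⟨j, hj⟩ := Function.ne_iff.1 hv0
  have hj1 : v j = 1 := by
    have : ∀ t : ZMod 2, t ≠ 0 → t = 1 := by decide
    exact this _ hj
  have hGv : G.mulVec v = 0 := by simpa using hv
  refine ⟨j, fun k => v (j.succAbove k), fun u => G.mulVec (j.insertNth 0 u), ?_⟩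
  funext z
  have hz : (j.insertNth 0 (reduce j (fun k => v (j.succAbove k)) z) : Fin 3 → ZMod 2)
      = z + z j • v := by
    have hself : ∀ t : ZMod 2, t + t = 0 := by decide
    funext i
    rcases Fin.eq_self_or_eq_succAbove j i with rfl | ⟨k, rfl⟩
    · simp [hj1, hself]
    · simp [reduce]
  simp only [Function.comp_apply]
  rw [hz, Matrix.mulVec_add, Matrix.mulVec_smul, hGv, smul_zero, add_zero]

/-- The channel simulating `reduce j w` from two bits, as a stochastic matrix. -/
lemma exists_stochastic {p0 p1 : ℝ} (hp0 : p0 ∈ Set.Icc (0 : ℝ) 1) (hp1 : p1 ∈ Set.Icc (0 : ℝ) 1)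
    (hne : p0 ≠ p1) (hA : 3 * p0 * p1 ≤ p0 + p1)
    (hB : 3 * (1 - p0) * (1 - p1) ≤ (1 - p0) + (1 - p1)) (w : Fin 2 → ZMod 2) :
    ∃ k : (Fin 2 → ZMod 2) → (Fin 2 → ZMod 2) → ℝ, (∀ x y, 0 ≤ k x y) ∧ (∀ x, ∑ y, k x y = 1) ∧
      ∀ p, p = p0 ∨ p = p1 → ∀ y,
        ∑ x, bernReal p 2 x * k x y = (1 - p) * bernReal p 2 y + p * bernReal p 2 (y + w) := by
  obtain ⟨h00, h01⟩ := hp0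
  obtain ⟨h10, h11⟩ := hp1
  have hA0 : 0 ≤ p0 * p1 := mul_nonneg h00 h10
  have hB0 : 0 ≤ (1 - p0) * (1 - p1) := mul_nonneg (by linarith) (by linarith)
  have hA2 : 2 * (p0 * p1) ≤ 1 := by nlinarith
  have hB2 : 2 * ((1 - p0) * (1 - p1)) ≤ 1 := by nlinarith
  -- The chance of outputting a one in the simulation of `Bern(2p(1-p))` from the bit `t`.
  let r : ZMod 2 → ℝ := fun t => if t = 1 then 2 * ((1 - p0) * (1 - p1)) else 2 * (p0 * p1)
  have hr0 (t) : 0 ≤ r t := by simp only [r]; split_ifs <;> linarith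
  have hr1 (t) : r t ≤ 1 := by simp only [r]; split_ifs <;> linarith
  revert w
  apply forall_vec2
  · refine ⟨fun x y => if x = y then 1 else 0, fun x y => by dsimp only; split_ifs <;> norm_num,
      fun x => by simp, fun p _ y => ?_⟩
    have : y + ![0, 0] = y := by revert y; decide
    rw [this]
    simp
    ring
  · refine ⟨fun x y => (if x 0 = y 0 then 1 else 0) * (if y 1 = 1 then r (x 1) else 1 - r (x 1)),
      fun x y => mul_nonneg (by split_ifs <;> norm_num)
        (by split_ifs <;> linarith [hr0 (x 1), hr1 (x 1)]), ?_, ?_⟩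
    · apply forall_vec2 <;> simp [sum_vec2]
    · rintro p (rfl | rfl) <;> apply forall_vec2 <;>
        simp [sum_vec2, bernReal, Fin.prod_univ_two, r, CharTwo.add_self_eq_zero] <;> ring
  · refine ⟨fun x y => (if x 1 = y 1 then 1 else 0) * (if y 0 = 1 then r (x 0) else 1 - r (x 0)),
      fun x y => mul_nonneg (by split_ifs <;> norm_num)
        (by split_ifs <;> linarith [hr0 (x 0), hr1 (x 0)]), ?_, ?_⟩
    · apply forall_vec2 <;> simp [sum_vec2]
    · rintro p (rfl | rfl) <;> apply forall_vec2 <;>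
        simp [sum_vec2, bernReal, Fin.prod_univ_two, r, CharTwo.add_self_eq_zero] <;> ring
  · obtain ⟨s, hs⟩ : ∃ s, s = p0 * (1 - p1) + p1 * (1 - p0) := ⟨_, rfl⟩
    have hs0 : 0 < s := by
      have : 0 < (p0 - p1) ^ 2 := by positivity [sub_ne_zero.2 hne]
      nlinarith
    -- The chance of a nonzero output on input `x`.
    let φ : (Fin 2 → ZMod 2) → ℝ := fun x =>
      if x 0 = x 1 then (if x 0 = 1 then (1 - p0) * (1 - p1) / s else p0 * p1 / s) else 1
    have hφ0 (x) : 0 ≤ φ x := by simp only [φ]; split_ifs <;> positivity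
    have hφ1 (x) : φ x ≤ 1 := by
      simp only [φ]
      split_ifs
      · rw [div_le_one hs0]; nlinarith
      · rw [div_le_one hs0]; nlinarith
      · exact le_rfl
    refine ⟨fun x y => if y = 0 then 1 - φ x else φ x / 3,
      fun x y => by have := hφ0 x; have := hφ1 x; dsimp only; split_ifs <;> linarith, fun x => ?_, ?_⟩
    · simp [sum_vec2]; ring
    · rintro p (rfl | rfl) <;> apply forall_vec2 <;>
        simp [sum_vec2, bernReal, Fin.prod_univ_two, φ, CharTwo.add_self_eq_zero] <;>
        field_simp <;> rw [hs] <;> ring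

/-- Elimination step of the converse: `a, b₁, b₂, c` are acceptance probabilities of a test on two
bits whose acceptance probability is `3p(1-p)` at both `p₀` and `p₁`. -/
lemma region_of_test {p0 p1 a b₁ b₂ c : ℝ} (hp0 : p0 ∈ Set.Icc (0 : ℝ) 1)
    (hp1 : p1 ∈ Set.Icc (0 : ℝ) 1) (hne : p0 ≠ p1) (ha : a ≤ 1) (hb₁ : b₁ ≤ 1) (hb₂ : b₂ ≤ 1)
    (hc : c ≤ 1)
    (e0 : a * (1 - p0) ^ 2 + (b₁ + b₂) * (p0 * (1 - p0)) + c * p0 ^ 2 = 3 * (p0 * (1 - p0)))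
    (e1 : a * (1 - p1) ^ 2 + (b₁ + b₂) * (p1 * (1 - p1)) + c * p1 ^ 2 = 3 * (p1 * (1 - p1))) :
    3 * p0 * p1 ≤ p0 + p1 ∧ 3 * (1 - p0) * (1 - p1) ≤ (1 - p0) + (1 - p1) := by
  obtain ⟨h00, h01⟩ := hp0
  obtain ⟨h10, h11⟩ := hp1
  have hd : p1 - p0 ≠ 0 := sub_ne_zero.2 hne.symm
  have hA0 : 0 ≤ p0 * p1 := mul_nonneg h00 h10
  have hB0 : 0 ≤ (1 - p0) * (1 - p1) := mul_nonneg (by linarith) (by linarith)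
  have hs0 : 0 ≤ p0 * (1 - p1) + p1 * (1 - p0) :=
    add_nonneg (mul_nonneg h00 (by linarith)) (mul_nonneg h10 (by linarith))
  have hA : a * (p0 * (1 - p1) + p1 * (1 - p0)) = (3 - b₁ - b₂) * (p0 * p1) := by
    apply mul_left_cancel₀ hd
    linear_combination p1 ^ 2 * e0 - p0 ^ 2 * e1
  have hB : c * (p0 * (1 - p1) + p1 * (1 - p0)) = (3 - b₁ - b₂) * ((1 - p0) * (1 - p1)) := by
    apply mul_left_cancel₀ hd
    linear_combination (1 - p0) ^ 2 * e1 - (1 - p1) ^ 2 * e0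
  have hb : 0 ≤ 2 - b₁ - b₂ := by linarith
  constructor
  · nlinarith [mul_nonneg hb hA0, mul_nonneg (sub_nonneg.2 ha) hs0]
  · nlinarith [mul_nonneg hb hB0, mul_nonneg (sub_nonneg.2 hc) hs0]

/-- Exact region where truncation `X² ⊕ Y²` Blackwell-dominates `G(X³ ⊕ Y³)` for all
rank-2 codes `G`: this happens iff `p₀ + p₁ ≥ 3 p₀ p₁` and
`(1-p₀) + (1-p₁) ≥ 3 (1-p₀)(1-p₁)`. -/
theorem truncation_region_k2_n3
    (p0 p1 : ℝ) (hp0 : p0 ∈ Set.Icc (0 : ℝ) 1) (hp1 : p1 ∈ Set.Icc (0 : ℝ) 1)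
    (hne : p0 ≠ p1)
    (μ0 μ1 : PMF (Fin 2 → ZMod 2))
    (hμ0 : ∀ z, μ0 z = bernMass p0 2 z)
    (hμ1 : ∀ z, μ1 z = bernMass p1 2 z)
    (ν0 ν1 : PMF (Fin 3 → ZMod 2))
    (hν0 : ∀ z, ν0 z = bernMass p0 3 z)
    (hν1 : ∀ z, ν1 z = bernMass p1 3 z) :
    (∀ G : Matrix (Fin 2) (Fin 3) (ZMod 2), G.rank = 2 →
        ∃ κ : (Fin 2 → ZMod 2) → PMF (Fin 2 → ZMod 2),
          μ0.bind κ = ν0.map G.mulVec ∧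
          μ1.bind κ = ν1.map G.mulVec) ↔
      (3 * p0 * p1 ≤ p0 + p1 ∧ 3 * (1 - p0) * (1 - p1) ≤ (1 - p0) + (1 - p1)) := by
  constructor
  · intro h
    -- This matrix has kernel spanned by the all-ones vector.
    let G : Matrix (Fin 2) (Fin 3) (ZMod 2) := !![1, 0, 1; 0, 1, 1]
    have hG : G.mulVec = reduce 2 ![1, 1] := by
      have : ∀ z, G.mulVec z = reduce 2 ![1, 1] z := by decide
      exact funext this
    have hrank : G.rank = 2 := by
      have hsurj : Function.Surjective G.mulVecLin := by
        have : ∀ y, G.mulVec ![y 0, y 1, 0] = y := by decide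
        exact fun y => ⟨_, this y⟩
      rw [Matrix.rank, LinearMap.range_eq_top.2 hsurj, finrank_top]
      simp
    obtain ⟨κ, e0, e1⟩ := h G hrank
    have key {p : ℝ} (hp : p ∈ Set.Icc (0 : ℝ) 1) {μ : PMF (Fin 2 → ZMod 2)}
        (hμ : ∀ z, μ z = bernMass p 2 z) {ν : PMF (Fin 3 → ZMod 2)}
        (hν : ∀ z, ν z = bernMass p 3 z) (e : μ.bind κ = ν.map G.mulVec) :
        (1 - (κ ![0, 0] 0).toReal) * (1 - p) ^ 2
          + ((1 - (κ ![0, 1] 0).toReal) + (1 - (κ ![1, 0] 0).toReal)) * (p * (1 - p))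
          + (1 - (κ ![1, 1] 0).toReal) * p ^ 2 = 3 * (p * (1 - p)) := by
      have h1 := map_reduce_toReal hp hν 2 ![1, 1] 0
      rw [← hG, ← e, bind_toReal, sum_vec2] at h1
      simp only [hμ, bernMass_toReal hp] at h1
      simp [bernReal, Fin.prod_univ_two] at h1
      linear_combination -h1
    have hle (x) : 1 - (κ x 0).toReal ≤ 1 := by linarith [ENNReal.toReal_nonneg (a := κ x 0)]
    exact region_of_test hp0 hp1 hne (hle _) (hle _) (hle _) (hle _)
      (key hp0 hμ0 hν0 e0) (key hp1 hμ1 hν1 e1)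
  · rintro ⟨hA, hB⟩ G -
    obtain ⟨j, w, e, hG⟩ := exists_factor G
    obtain ⟨k, hk0, hk1, hk⟩ := exists_stochastic hp0 hp1 hne hA hB w
    obtain ⟨κ, hκ⟩ := exists_channel_s11 k hk0 hk1
    have key {p : ℝ} (hp : p ∈ Set.Icc (0 : ℝ) 1) (hp' : p = p0 ∨ p = p1)
        {μ : PMF (Fin 2 → ZMod 2)} (hμ : ∀ z, μ z = bernMass p 2 z) {ν : PMF (Fin 3 → ZMod 2)}
        (hν : ∀ z, ν z = bernMass p 3 z) :
        μ.bind (fun x => (κ x).map e) = ν.map G.mulVec := by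
      have h1 : μ.bind κ = ν.map (reduce j w) := by
        refine pmf_ext_toReal fun y => ?_
        rw [bind_toReal, map_reduce_toReal hp hν, ← hk p hp' y]
        simp only [hμ, bernMass_toReal hp, hκ]
      rw [hG, ← PMF.map_comp, ← h1, PMF.map_bind]
    exact ⟨_, key hp0 (Or.inl rfl) hμ0 hν0, key hp1 (Or.inr rfl) hμ1 hν1⟩
end

section
/- Let p ∈ (0,1) and α ∈ (0,1/2). For i ∈ {0,1}, define the PMF P^i on (ZMod 2)^4 (coordinates written (u,x,y,v)) by P^i(u,x,y,v) = b_α(u + x) · (1/2) · b_{q_i}(x + y) · b_α(y + v), where b_t(0) = 1 − t, b_t(1) = t, q_0 = p, and q_1 = 1/2 (so P^0 is X uniform, Y = X ⊕ Bern(p)-noise, with U and V obtained from X and Y through independent BSC(α) channels, and P^1 is the same with X and Y independent). Let S be the set of PMFs π on (ZMod 2)^4 whose (u,x)-marginal, (v,y)-marginal, and (u,v)-marginal all coincide with those of P^0. Then the minimum over π ∈ S of the Kullback–Leibler divergence D(π ‖ P^1) (natural logarithm) is attained and equals log 2 − H(α ∗ α ∗ p), where a ∗ b = a·(1 − b) +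 b·(1 − a) and H(t) = −t·log t − (1 − t)·log(1 − t) is the binary entropy with natural logarithm. (This computes Han's random-coding Stein exponent E_Han = I(U;V) = 1 − h₂(α ∗ α ∗ p) bits, at rate R = 1 − h₂(α) bits, for testing DSBS(p) against independence with identical BSC(α) test channels.) -/
/-!
The minimiser is the coupling `π*` in which `X` and `Y` are drawn from `U` and `V` independently
through the test channels, with `(U, V)` distributed as under `P⁰`. Writing `c = α ∗ α ∗ p` for the
crossover probability between `U` and `V` under `P⁰`, it is the tilt
`π* (u,x,y,v) = P¹ (u,x,y,v) · 2 b_c(u + v)`. Hence for every `π`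
`D(π ‖ P¹) = D(π ‖ π*) + E_π[log (2 b_c(u + v))]`.
The last term depends only on the `(u,v)`-marginal of `π`, so on the feasible set it equals
`E_{P⁰}[log (2 b_c(u + v))] = log 2 - H(c)` (`sum_mul_log_tilt`), while `D(π ‖ π*) ≥ 0`
is Gibbs' inequality (`gibbs`). The bound is attained because `π*` is itself feasible.
-/

open scoped ENNReal

/-- Bernoulli mass on a single bit: `bmass t 0 = 1 - t`, `bmass t 1 = t` (as `ℝ≥0∞`). -/
noncomputable def bmass (t : ℝ) (s : ZMod 2) : ℝ≥0∞ :=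
  if s = 1 then ENNReal.ofReal t else ENNReal.ofReal (1 - t)

/-- Binary convolution `a ∗ b = a(1-b) + b(1-a)`. -/
def conv (a b : ℝ) : ℝ := a * (1 - b) + b * (1 - a)

/-- Kullback–Leibler divergence (natural logarithm) between two PMFs on a finite type,
with the convention `0 · log (0 / q) = 0` (automatic since `Real.log 0 = 0`). -/
noncomputable def klDiv {α : Type*} [Fintype α] (μ ν : PMF α) : ℝ :=
  ∑ a : α, (μ a).toReal * Real.log ((μ a).toReal / (ν a).toReal)

/-- Quadruples of bits `(u, x, y, v)`. -/
abbrev Quad := ZMod 2 × ZMod 2 × ZMod 2 × ZMod 2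

/-- The real-valued version of `bmass`. -/
noncomputable def bern (t : ℝ) (s : ZMod 2) : ℝ := if s = 1 then t else 1 - t

/-- The Markov-chain mass function `b_α(u + x) · (1/2) · b_q(x + y) · b_α(y + v)`. -/
noncomputable def chain (α q : ℝ) (w : Quad) : ℝ :=
  bern α (w.1 + w.2.1) * (1 / 2) * bern q (w.2.1 + w.2.2.1) * bern α (w.2.2.1 + w.2.2.2)

/-- The optimal coupling `π*`: the independent chain tilted by the likelihood ratio
`2 b_c(u + v)` of the pair `(U, V)`. -/
noncomputable def tilted (α c : ℝ) (w : Quad) : ℝ :=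
  chain α (1 / 2) w * (2 * bern c (w.1 + w.2.2.2))

lemma bern_pos {t : ℝ} (ht : t ∈ Set.Ioo (0 : ℝ) 1) (s : ZMod 2) : 0 < bern t s := by
  unfold bern; split_ifs <;> linarith [ht.1, ht.2]

lemma toReal_bmass {t : ℝ} (ht : t ∈ Set.Ioo (0 : ℝ) 1) (s : ZMod 2) :
    (bmass t s).toReal = bern t s := by
  unfold bmass bern
  split_ifs
  · exact ENNReal.toReal_ofReal ht.1.le
  · exact ENNReal.toReal_ofReal (by linarith [ht.2])

lemma chain_pos {α q : ℝ} (hα : α ∈ Set.Ioo (0 : ℝ) 1) (hq : q ∈ Set.Ioo (0 : ℝ) 1) (w : Quad) :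
    0 < chain α q w := by
  unfold chain
  have h1 := bern_pos hα (w.1 + w.2.1)
  have h2 := bern_pos hq (w.2.1 + w.2.2.1)
  have h3 := bern_pos hα (w.2.2.1 + w.2.2.2)
  positivity

lemma tilted_pos {α c : ℝ} (hα : α ∈ Set.Ioo (0 : ℝ) 1) (hc : c ∈ Set.Ioo (0 : ℝ) 1) (w : Quad) :
    0 < tilted α c w := by
  unfold tilted
  have h1 := chain_pos hα (by norm_num : (1 / 2 : ℝ) ∈ Set.Ioo (0 : ℝ) 1) w
  have h2 := bern_pos hc (w.1 + w.2.2.2)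
  positivity

lemma conv_mem {a b : ℝ} (ha : a ∈ Set.Ioo (0 : ℝ) 1) (hb : b ∈ Set.Ioo (0 : ℝ) 1) :
    conv a b ∈ Set.Ioo (0 : ℝ) 1 := by
  obtain ⟨ha0, ha1⟩ := ha
  obtain ⟨hb0, hb1⟩ := hb
  unfold conv
  constructor <;> nlinarith [mul_pos ha0 hb0, mul_pos (sub_pos.2 ha1) (sub_pos.2 hb1),
    mul_pos ha0 (sub_pos.2 hb1), mul_pos hb0 (sub_pos.2 ha1)]

lemma sum_bit (f : ZMod 2 → ℝ) : ∑ z, f z = f 0 + f 1 := Fin.sum_univ_two f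

lemma bit_one_add_one : (1 + 1 : ZMod 2) = 0 := by decide

lemma bit_cases (z : ZMod 2) : z = 0 ∨ z = 1 := by revert z; decide

lemma sum_tilted (α c : ℝ) : ∑ w, tilted α c w = 1 := by
  simp only [tilted, chain, Fintype.sum_prod_type, sum_bit, bern, bit_one_add_one, add_zero,
    zero_add, if_true, zero_ne_one, if_false]
  ring

/-- `E_{P⁰}[log (2 b_c(u + v))] = log 2 - H(c)` for `c = α ∗ α ∗ p`; this is `I(U;V)`
under `P⁰`. -/
lemma sum_mul_log_tilt {α p : ℝ} (hc : conv α (conv α p) ∈ Set.Ioo (0 : ℝ) 1) :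
    ∑ w : Quad, chain α p w * Real.log (2 * bern (conv α (conv α p)) (w.1 + w.2.2.2)) =
      Real.log 2 - Real.binEntropy (conv α (conv α p)) := by
  have h0 : Real.log (2 * conv α (conv α p)) = Real.log 2 + Real.log (conv α (conv α p)) :=
    Real.log_mul two_ne_zero hc.1.ne'
  have h1 : Real.log (2 * (1 - conv α (conv α p))) =
      Real.log 2 + Real.log (1 - conv α (conv α p)) :=
    Real.log_mul two_ne_zero (sub_pos.2 hc.2).ne'
  simp only [chain, Fintype.sum_prod_type, sum_bit, bern, bit_one_add_one, add_zero,
    zero_add, if_true, zero_ne_one, if_false, h0, h1, Real.binEntropy, Real.log_inv]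
  generalize Real.log (conv α (conv α p)) = L
  generalize Real.log (1 - conv α (conv α p)) = M
  unfold conv
  ring

lemma toReal_map_apply {β : Type*} [DecidableEq β] (π : PMF Quad) (g : Quad → β) (b : β) :
    (π.map g b).toReal = ∑ a, if b = g a then (π a).toReal else 0 := by
  classical
  rw [PMF.map_apply, tsum_fintype, ENNReal.toReal_sum]
  · refine Finset.sum_congr rfl fun a _ => ?_
    split_ifs <;> simp
  · intro a _
    split_ifs
    · exact π.apply_ne_top a
    · simp

lemma map_eq_of_sum_eq {β : Type*} [DecidableEq β] {π μ : PMF Quad} {g : Quad → β}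
    (h : ∀ b, (∑ a, if b = g a then (π a).toReal else 0) =
      ∑ a, if b = g a then (μ a).toReal else 0) : π.map g = μ.map g := by
  ext b
  rw [← ENNReal.toReal_eq_toReal_iff' (PMF.apply_ne_top _ _) (PMF.apply_ne_top _ _),
    toReal_map_apply, toReal_map_apply, h]

/-- Expectations of a function of `g` depend only on the marginal along `g`. -/
lemma sum_comp_eq_of_map_eq {β : Type*} [Fintype β] [DecidableEq β] {π μ : PMF Quad}
    {g : Quad → β} (h : π.map g = μ.map g) (φ : β → ℝ) :
    ∑ a, (π a).toReal * φ (g a) = ∑ a, (μ a).toReal * φ (g a) := by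
  have key : ∀ ν : PMF Quad,
      ∑ a, (ν a).toReal * φ (g a) = ∑ b, (ν.map g b).toReal * φ b := by
    intro ν
    simp only [toReal_map_apply, Finset.sum_mul, ite_mul, zero_mul]
    rw [Finset.sum_comm]
    simp
  rw [key, key, h]

lemma sum_toReal (π : PMF Quad) : ∑ a, (π a).toReal = 1 := by
  rw [← ENNReal.toReal_sum fun a _ => π.apply_ne_top a, ← tsum_fintype (L := .unconditional _),
    π.tsum_coe, ENNReal.toReal_one]

lemma sub_le_mul_log_div {q r : ℝ} (hq : 0 ≤ q) (hr : 0 < r) :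
    q - r ≤ q * Real.log (q / r) := by
  rcases hq.eq_or_lt with rfl | hq
  · simp [hr.le]
  · have h := mul_le_mul_of_nonneg_left (Real.one_sub_inv_le_log_of_pos (div_pos hq hr)) hq.le
    have e : q * (1 - (q / r)⁻¹) = q - r := by field_simp
    linarith

/-- Gibbs' inequality. -/
lemma gibbs (π : PMF Quad) {r : Quad → ℝ} (hr : ∀ w, 0 < r w) (hs : ∑ w, r w = 1) :
    0 ≤ ∑ w, (π w).toReal * Real.log ((π w).toReal / r w) := by
  have h := Finset.sum_le_sum fun w (_ : w ∈ Finset.univ) =>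
    sub_le_mul_log_div (ENNReal.toReal_nonneg (a := π w)) (hr w)
  rw [Finset.sum_sub_distrib, sum_toReal, hs, sub_self] at h
  exact h

/-- The chain rule `D(π ‖ P¹) = D(π ‖ π*) + E_π[log (2 b_c(u + v))]`. -/
lemma klDiv_eq_add {α c : ℝ} (hα : α ∈ Set.Ioo (0 : ℝ) 1) (hc : c ∈ Set.Ioo (0 : ℝ) 1)
    (π P1 : PMF Quad) (hP1 : ∀ w, (P1 w).toReal = chain α (1 / 2) w) :
    klDiv π P1 = ∑ w, (π w).toReal * Real.log ((π w).toReal / tilted α c w) +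
      ∑ w, (π w).toReal * Real.log (2 * bern c (w.1 + w.2.2.2)) := by
  rw [klDiv, ← Finset.sum_add_distrib]
  refine Finset.sum_congr rfl fun w _ => ?_
  rw [hP1, ← mul_add]
  rcases eq_or_ne (π w).toReal 0 with h0 | h0
  · simp [h0]
  · have h1 := chain_pos hα (by norm_num : (1 / 2 : ℝ) ∈ Set.Ioo (0 : ℝ) 1) w
    have h2 := bern_pos hc (w.1 + w.2.2.2)
    have h3 := tilted_pos hα hc w
    rw [← Real.log_mul (div_ne_zero h0 h3.ne') (by positivity)]
    congr 2
    unfold tilted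
    field_simp

/-- Han's random-coding Stein exponent for testing `DSBS(p)` against independence with
identical `BSC(α)` test channels: the minimum of `D(π ‖ P¹)` over all PMFs `π` on
`(u,x,y,v)`-quadruples of bits whose `(u,x)`-, `(v,y)`- and `(u,v)`-marginals agree with
those of `P⁰` is attained and equals `log 2 − H(α ∗ α ∗ p)` (natural-log binary
entropy `H`), i.e. `E_Han = I(U;V) = 1 − h₂(α ∗ α ∗ p)` bits. -/
theorem han_exponent_testing_against_independence
    (p α : ℝ) (hp : p ∈ Set.Ioo (0 : ℝ) 1) (hα : α ∈ Set.Ioo (0 : ℝ) (1 / 2))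
    (P0 P1 : PMF (ZMod 2 × ZMod 2 × ZMod 2 × ZMod 2))
    (hP0 : ∀ w, P0 w = bmass α (w.1 + w.2.1) * (1 / 2 : ℝ≥0∞) *
      bmass p (w.2.1 + w.2.2.1) * bmass α (w.2.2.1 + w.2.2.2))
    (hP1 : ∀ w, P1 w = bmass α (w.1 + w.2.1) * (1 / 2 : ℝ≥0∞) *
      bmass (1 / 2) (w.2.1 + w.2.2.1) * bmass α (w.2.2.1 + w.2.2.2)) :
    IsLeast
      ((fun π => klDiv π P1) ''
        {π : PMF (ZMod 2 × ZMod 2 × ZMod 2 × ZMod 2) |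
          π.map (fun w => (w.1, w.2.1)) = P0.map (fun w => (w.1, w.2.1)) ∧
          π.map (fun w => (w.2.2.2, w.2.2.1)) = P0.map (fun w => (w.2.2.2, w.2.2.1)) ∧
          π.map (fun w => (w.1, w.2.2.2)) = P0.map (fun w => (w.1, w.2.2.2))})
      (Real.log 2 - Real.binEntropy (conv α (conv α p))) := by
  have hα1 : α ∈ Set.Ioo (0 : ℝ) 1 := ⟨hα.1, by linarith [hα.2]⟩
  have hhalf : (1 / 2 : ℝ) ∈ Set.Ioo (0 : ℝ) 1 := by norm_num
  have hc := conv_mem hα1 (conv_mem hα1 hp)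
  have hP0' : ∀ w, (P0 w).toReal = chain α p w := fun w => by
    simp [hP0, chain, toReal_bmass hα1, toReal_bmass hp]
  have hP1' : ∀ w, (P1 w).toReal = chain α (1 / 2) w := fun w => by
    rw [hP1]
    simp only [chain, ENNReal.toReal_mul, toReal_bmass hα1, toReal_bmass hhalf]
    simp
  -- On the feasible set the second term of the chain rule is constant.
  have hval : ∀ π : PMF Quad,
      π.map (fun w => (w.1, w.2.2.2)) = P0.map (fun w => (w.1, w.2.2.2)) →
      ∑ w, (π w).toReal * Real.log (2 * bern (conv α (conv α p)) (w.1 + w.2.2.2)) =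
        Real.log 2 - Real.binEntropy (conv α (conv α p)) := fun π h => by
    have h' := sum_comp_eq_of_map_eq h
      (fun b => Real.log (2 * bern (conv α (conv α p)) (b.1 + b.2)))
    simp only [hP0'] at h'
    rw [h', sum_mul_log_tilt hc]
  constructor
  · let σ : PMF Quad := PMF.ofFintype
      (fun w => ENNReal.ofReal (tilted α (conv α (conv α p)) w)) (by
        rw [← ENNReal.ofReal_sum_of_nonneg fun w _ => (tilted_pos hα1 hc w).le,
          sum_tilted, ENNReal.ofReal_one])
    have hσ : ∀ w, (σ w).toReal = tilted α (conv α (conv α p)) w := fun w =>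
      ENNReal.toReal_ofReal (tilted_pos hα1 hc w).le
    have huv : σ.map (fun w => (w.1, w.2.2.2)) = P0.map (fun w => (w.1, w.2.2.2)) := by
      refine map_eq_of_sum_eq fun b => ?_
      obtain ⟨b1, b2⟩ := b
      simp only [hσ, hP0']
      rcases bit_cases b1 with rfl | rfl <;> rcases bit_cases b2 with rfl | rfl <;>
      · simp [tilted, chain, Fintype.sum_prod_type, sum_bit, bern, conv]
        ring
    refine ⟨σ, ⟨?_, ?_, huv⟩, ?_⟩
    · refine map_eq_of_sum_eq fun b => ?_
      obtain ⟨b1, b2⟩ := b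
      simp only [hσ, hP0']
      rcases bit_cases b1 with rfl | rfl <;> rcases bit_cases b2 with rfl | rfl <;>
      · simp [tilted, chain, Fintype.sum_prod_type, sum_bit, bern]
        ring
    · refine map_eq_of_sum_eq fun b => ?_
      obtain ⟨b1, b2⟩ := b
      simp only [hσ, hP0']
      rcases bit_cases b1 with rfl | rfl <;> rcases bit_cases b2 with rfl | rfl <;>
      · simp [tilted, chain, Fintype.sum_prod_type, sum_bit, bern]
        ring
    · change klDiv σ P1 = _
      rw [klDiv_eq_add hα1 hc σ P1 hP1', hval σ huv]
      simp [hσ, div_self (tilted_pos hα1 hc _).ne']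
  · rintro _ ⟨π, ⟨-, -, huv⟩, rfl⟩
    change _ ≤ klDiv π P1
    rw [klDiv_eq_add hα1 hc π P1 hP1', hval π huv]
    exact le_add_of_nonneg_left (gibbs π (tilted_pos hα1 hc) (sum_tilted _ _))
end
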